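/- arXiv:1611.00735 — 5 statements merged into one kernel-verified Lean document; each statement's English description precedes it below -/
import Mathlib

section
/- Let n ≥ 1 and let S ⊂ ℤⁿ be a finite set. Then n! · vol(conv(S)) is a nonnegative integer, i.e., there exists m ∈ ℕ with n! · vol(conv(S)) = m. Here conv denotes convex hull in ℝⁿ and vol denotes n-dimensional Lebesgue measure. -/
open MeasureTheory

section
variable {E : Type*} [AddCommGroup E] [Module ℝ E]

/-- An affine function takes arbitrarily prescribed values on affinely independent points. -/
theorem AffineIndependent.exists_affineMap_eqOn {σ : Set E}
    (hσ : AffineIndependent ℝ ((↑) : σ → E)) [FiniteDimensional ℝ E] (h : E → ℝ) :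
    ∃ ℓ : E →ᵃ[ℝ] ℝ, ∀ t ∈ σ, ℓ t = h t := by
  classical
  obtain ⟨τ, hστ, hτ, htop⟩ := exists_subset_affineIndependent_affineSpan_eq_top hσ
  have : Finite τ := finite_of_fin_dim_affineIndependent ℝ hτ
  have := Fintype.ofFinite τ
  let b : AffineBasis τ ℝ E := ⟨(↑), hτ, by simpa using htop⟩
  refine ⟨∑ i : τ, h i • b.coord i, fun t ht => ?_⟩
  have hb : b ⟨t, hστ ht⟩ = t := rfl
  have key : ∀ i : τ, b.coord i t = if i = ⟨t, hστ ht⟩ then 1 else 0 := fun i => by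
    conv_lhs => rw [← hb]
    exact b.coord_apply i _
  have hsum : ∀ F : Finset τ, (∑ i ∈ F, h i • b.coord i) t = ∑ i ∈ F, h i * b.coord i t := by
    intro F
    induction F using Finset.induction_on with
    | empty => simp
    | insert a F ha ih => simp [Finset.sum_insert ha, ih]
  rw [hsum]
  simp [key]

theorem AffineMap.map_sum_smul {s : Finset E} {w : E → ℝ} (hw : ∑ y ∈ s, w y = 1)
    (ℓ : E →ᵃ[ℝ] ℝ) : ℓ (∑ y ∈ s, w y • y) = ∑ y ∈ s, w y * ℓ y := by
  have := Finset.map_affineCombination s (fun y : E => y) w hw ℓ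
  rw [Finset.affineCombination_eq_linear_combination _ _ _ hw,
    Finset.affineCombination_eq_linear_combination _ _ _ hw] at this
  simpa using this

theorem Finset.exists_weights_of_mem_affineSpan {σ : Finset E} {p : E}
    (hp : p ∈ affineSpan ℝ (σ : Set E)) :
    ∃ w : E → ℝ, ∑ y ∈ σ, w y = 1 ∧ ∑ y ∈ σ, w y • y = p := by
  classical
  have hp' : p ∈ affineSpan ℝ (Set.range ((↑) : σ → E)) := by simpa using hp
  obtain ⟨w, hw, hpw⟩ := eq_affineCombination_of_mem_affineSpan_of_fintype hp'
  rw [Finset.affineCombination_eq_linear_combination _ _ _ hw] at hpw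
  refine ⟨fun y => if hy : y ∈ σ then w ⟨y, hy⟩ else 0, ?_, ?_⟩
  · rw [← Finset.sum_coe_sort]; simpa using hw
  · rw [← Finset.sum_coe_sort, hpw]; simp

/-- A height function is generic on `s` if it never agrees on a subset `σ` and on a further point
of the affine span of `σ` with an affine function. -/
def IsGenericHeight (s : Finset E) (h : E → ℝ) : Prop :=
  ∀ σ ⊆ s, ∀ p ∈ s, p ∉ σ → p ∈ affineSpan ℝ (σ : Set E) →
    ∀ ℓ : E →ᵃ[ℝ] ℝ, (∀ t ∈ σ, ℓ t = h t) → ℓ p ≠ h p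

theorem exists_isGenericHeight (s : Finset E) : ∃ h : E → ℝ, IsGenericHeight s h := by
  classical
  let W : Finset E × E → Submodule ℝ (E → ℝ) := fun q =>
    { carrier := {h | ∃ ℓ : E →ᵃ[ℝ] ℝ, ∀ t ∈ insert q.2 q.1, ℓ t = h t}
      zero_mem' := ⟨0, by simp⟩
      add_mem' := by
        rintro a b ⟨ℓ, hℓ⟩ ⟨ℓ', hℓ'⟩
        exact ⟨ℓ + ℓ', fun t ht => by simp [hℓ t ht, hℓ' t ht]⟩
      smul_mem' := by
        rintro c a ⟨ℓ, hℓ⟩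
        exact ⟨c • ℓ, fun t ht => by simp [hℓ t ht]⟩ }
  let Q := (s.powerset ×ˢ s).filter fun q => q.2 ∉ q.1 ∧ q.2 ∈ affineSpan ℝ (q.1 : Set E)
  have htop : ⊤ ∉ Q.image W := by
    intro hmem
    obtain ⟨⟨σ, p⟩, hq, hW⟩ := Finset.mem_image.1 hmem
    obtain ⟨-, hpσ, hp⟩ := Finset.mem_filter.1 hq
    dsimp only at hpσ hp
    have : Pi.single p 1 ∈ W (σ, p) := hW ▸ Submodule.mem_top
    obtain ⟨ℓ, hℓ⟩ := this
    obtain ⟨w, hw, hwp⟩ := Finset.exists_weights_of_mem_affineSpan hp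
    have h1 := hℓ p (Finset.mem_insert_self _ _)
    nth_rw 1 [← hwp] at h1
    rw [Pi.single_eq_same, AffineMap.map_sum_smul hw, Finset.sum_eq_zero] at h1
    · exact zero_ne_one h1
    · intro t ht
      rw [hℓ t (Finset.mem_insert_of_mem ht), Pi.single_eq_of_ne (by rintro rfl; exact hpσ ht),
        mul_zero]
  obtain ⟨h, hh⟩ := (Set.ne_univ_iff_exists_notMem _).1
    (Subspace.biUnion_ne_univ_of_top_notMem htop)
  refine ⟨h, fun σ hσ p hp hpσ hpa ℓ hℓ hℓp => hh ?_⟩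
  refine Set.mem_biUnion (x := W (σ, p)) ?_ ⟨ℓ, ?_⟩
  · exact Finset.mem_image_of_mem _ (Finset.mem_filter.2 ⟨by simp [hσ, hp], hpσ, hpa⟩)
  · simpa [hℓp] using hℓ

/-- The lift by `h` of `σ ⊆ s` consists of the points on a non-vertical hyperplane that lies strictly
below the lifts of all other points of `s`. -/
def IsLowerFacet (s : Finset E) (h : E → ℝ) (σ : Finset E) : Prop :=
  σ ⊆ s ∧ ∃ ℓ : E →ᵃ[ℝ] ℝ, (∀ t ∈ σ, ℓ t = h t) ∧ ∀ t ∈ s, t ∉ σ → ℓ t < h t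

theorem mem_convexHull_filter_ne_zero {s : Finset E} {w : E → ℝ} (hw0 : ∀ y ∈ s, 0 ≤ w y)
    (hw1 : ∑ y ∈ s, w y = 1) :
    ∑ y ∈ s, w y • y ∈ convexHull ℝ ((s.filter (fun y => w y ≠ 0) : Finset E) : Set E) := by
  refine Finset.mem_convexHull'.2 ⟨w, fun y hy => hw0 y (Finset.mem_of_mem_filter y hy), ?_, ?_⟩
  · rw [Finset.sum_filter_ne_zero, hw1]
  · rw [Finset.sum_filter]
    refine Finset.sum_congr rfl fun y _ => ?_
    split_ifs with h
    · rfl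
    · rw [not_not.1 h, zero_smul]

/-- A point outside the convex hulls of fewer points lies in at most one lower facet. -/
theorem IsLowerFacet.eq_of_mem {s σ τ : Finset E} {h : E → ℝ} {x : E} (hσ : IsLowerFacet s h σ)
    (hτ : IsLowerFacet s h τ) (hcard : σ.card = τ.card)
    (hx : ∀ ρ ⊆ s, ρ.card < σ.card → x ∉ convexHull ℝ (ρ : Set E))
    (hxσ : x ∈ convexHull ℝ (σ : Set E)) (hxτ : x ∈ convexHull ℝ (τ : Set E)) : σ = τ := by
  classical
  by_contra hne
  have key : ∀ {σ τ : Finset E}, τ ⊆ s → σ.card = τ.card → σ ≠ τ →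
      (∀ ρ ⊆ s, ρ.card < σ.card → x ∉ convexHull ℝ (ρ : Set E)) →
      x ∈ convexHull ℝ (τ : Set E) → ∀ ℓ ℓ' : E →ᵃ[ℝ] ℝ,
      (∀ t ∈ σ, ℓ t = h t) → (∀ t ∈ s, t ∉ σ → ℓ t < h t) → (∀ t ∈ τ, ℓ' t = h t) →
      ℓ x < ℓ' x := by
    intro σ τ hτ hcard hne hx hxτ ℓ ℓ' hℓ hlt hℓ'
    obtain ⟨w, hw0, hw1, rfl⟩ := Finset.mem_convexHull'.1 hxτ
    have hpos : ∀ y ∈ τ, 0 < w y := by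
      intro y hy
      refine (hw0 y hy).lt_of_ne' fun hy0 => hx (τ.filter fun y => w y ≠ 0)
        ((Finset.filter_subset _ _).trans hτ) ?_ (mem_convexHull_filter_ne_zero hw0 hw1)
      rw [hcard]
      exact Finset.card_lt_card (Finset.filter_ssubset.2 ⟨y, hy, by simpa using hy0⟩)
    rw [AffineMap.map_sum_smul hw1, AffineMap.map_sum_smul hw1]
    obtain ⟨t, htτ, htσ⟩ : ∃ t ∈ τ, t ∉ σ := by
      by_contra! hsub
      exact hne (Finset.eq_of_subset_of_card_le hsub hcard.le).symm
    refine Finset.sum_lt_sum (fun y hy => ?_) ⟨t, htτ, ?_⟩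
    · refine mul_le_mul_of_nonneg_left ?_ (hw0 y hy)
      rw [hℓ' y hy]
      by_cases hyσ : y ∈ σ
      · exact (hℓ y hyσ).le
      · exact (hlt y (hτ hy) hyσ).le
    · rw [hℓ' t htτ]
      exact mul_lt_mul_of_pos_left (hlt t (hτ htτ) htσ) (hpos t htτ)
  obtain ⟨ℓ, hℓ, hℓs⟩ := hσ.2
  obtain ⟨ℓ', hℓ', hℓs'⟩ := hτ.2
  exact lt_asymm (key hτ.1 hcard hne hx hxτ ℓ ℓ' hℓ hℓs hℓ')
    (key hσ.1 hcard.symm (Ne.symm hne) (hcard ▸ hx) hxσ ℓ' ℓ hℓ' hℓs' hℓ)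

/-- First-order optimality: at weights minimizing the lifted height over a fiber, no feasible
direction decreases the height. -/
theorem sum_mul_nonneg_of_isMin {s : Finset E} {h w d : E → ℝ} (hw0 : ∀ y ∈ s, 0 ≤ w y)
    (hmin : ∀ w' : E → ℝ, (∀ y ∈ s, 0 ≤ w' y) → ∑ y ∈ s, w' y = ∑ y ∈ s, w y →
      ∑ y ∈ s, w' y • y = ∑ y ∈ s, w y • y → ∑ y ∈ s, w y * h y ≤ ∑ y ∈ s, w' y * h y)
    (hd1 : ∑ y ∈ s, d y = 0) (hd : ∑ y ∈ s, d y • y = 0)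
    (hdw : ∀ y ∈ s, d y < 0 → 0 < w y) : 0 ≤ ∑ y ∈ s, d y * h y := by
  have hev : ∀ᶠ ε : ℝ in nhdsWithin 0 (Set.Ioi 0), ∀ y ∈ s, 0 ≤ w y + ε * d y := by
    rw [Filter.eventually_all_finset]
    intro y hy
    rcases lt_or_ge (d y) 0 with hdy | hdy
    · have hc : Filter.Tendsto (fun ε : ℝ => w y + ε * d y) (nhdsWithin 0 (Set.Ioi 0))
          (nhds (w y + 0 * d y)) :=
        (Continuous.tendsto (by fun_prop) 0).mono_left nhdsWithin_le_nhds
      filter_upwards [hc.eventually (lt_mem_nhds (by simpa using hdw y hy hdy : (0 : ℝ) < _))]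
        with ε hε using hε.le
    · filter_upwards [self_mem_nhdsWithin] with ε hε
      exact add_nonneg (hw0 y hy) (mul_nonneg (le_of_lt hε) hdy)
  obtain ⟨ε, hε, hεpos⟩ := (hev.and self_mem_nhdsWithin).exists
  have hεpos : 0 < ε := hεpos
  have h1 := hmin (fun y => w y + ε * d y) hε
    (by rw [Finset.sum_add_distrib, ← Finset.mul_sum, hd1]; simp)
    (by simp_rw [add_smul, mul_smul]; rw [Finset.sum_add_distrib, ← Finset.smul_sum, hd]; simp)
  simp_rw [add_mul, mul_assoc] at h1
  rw [Finset.sum_add_distrib, ← Finset.mul_sum] at h1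
  exact nonneg_of_mul_nonneg_right (by linarith) hεpos

/-- Every point of a polytope has a representation of least lifted height. -/
theorem exists_weights_isMin [FiniteDimensional ℝ E] (s : Finset E) (h : E → ℝ) {x : E}
    (hx : x ∈ convexHull ℝ (s : Set E)) :
    ∃ w : E → ℝ, (∀ y ∈ s, 0 ≤ w y) ∧ ∑ y ∈ s, w y = 1 ∧ ∑ y ∈ s, w y • y = x ∧
      ∀ w' : E → ℝ, (∀ y ∈ s, 0 ≤ w' y) → ∑ y ∈ s, w' y = 1 → ∑ y ∈ s, w' y • y = x →
        ∑ y ∈ s, w y * h y ≤ ∑ y ∈ s, w' y * h y := by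
  classical
  let extend : (s → ℝ) → E → ℝ := fun v y => if hy : y ∈ s then v ⟨y, hy⟩ else 0
  have hext : ∀ (v : s → ℝ) (i : s), extend v i = v i := fun v i => by simp [extend]
  let e := Module.finBasis ℝ E
  let K : Set (s → ℝ) := stdSimplex ℝ s ∩
    {v | ∀ i, ∑ y : s, v y * e.repr (y : E) i = e.repr x i}
  have hmem : ∀ v : s → ℝ, (∀ i, ∑ y : s, v y * e.repr (y : E) i = e.repr x i) ↔
      ∑ y : s, v y • (y : E) = x := by
    intro v
    rw [← e.repr.injective.eq_iff, DFunLike.ext_iff]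
    simp [Finsupp.finsetSum_apply]
  have hK : IsCompact K := by
    refine (isCompact_stdSimplex ℝ s).inter_right ?_
    simp_rw [Set.ofPred_forall]
    exact isClosed_iInter fun i => isClosed_eq (by fun_prop) continuous_const
  have hrestrict : ∀ w' : E → ℝ, (∀ y ∈ s, 0 ≤ w' y) → ∑ y ∈ s, w' y = 1 →
      ∑ y ∈ s, w' y • y = x → (fun y : s => w' y) ∈ K := by
    intro w' h0 h1 h2
    refine ⟨⟨fun y => h0 y y.2, ?_⟩, (hmem _).2 ?_⟩
    · rw [Finset.sum_coe_sort s w', h1]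
    · rw [Finset.sum_coe_sort s (fun y => w' y • y), h2]
  obtain ⟨w₀, h0, h1, h2⟩ := Finset.mem_convexHull'.1 hx
  obtain ⟨v, hvK, hv⟩ := hK.exists_isMinOn ⟨_, hrestrict w₀ h0 h1 h2⟩
    (f := fun v : s → ℝ => ∑ y : s, v y * h y) (by fun_prop)
  refine ⟨extend v, fun y hy => ?_, ?_, ?_, fun w' h0 h1 h2 => ?_⟩
  · simpa [extend, hy] using hvK.1.1 ⟨y, hy⟩
  · rw [← Finset.sum_coe_sort]; simpa [hext] using hvK.1.2
  · rw [← Finset.sum_coe_sort]; simpa [hext] using (hmem v).1 hvK.2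
  · have := isMinOn_iff.1 hv _ (hrestrict w' h0 h1 h2)
    rw [← Finset.sum_coe_sort, ← Finset.sum_coe_sort s (fun y => w' y * h y)]
    simpa [hext] using this

/-- A point of a polytope outside the convex hulls of at most `finrank ℝ E` vertices lies in a lower
facet. -/
theorem exists_isLowerFacet_mem [FiniteDimensional ℝ E] {s : Finset E} {h : E → ℝ}
    (hh : IsGenericHeight s h) {x : E} (hxs : x ∈ convexHull ℝ (s : Set E))
    (hx : ∀ ρ ⊆ s, ρ.card < Module.finrank ℝ E + 1 → x ∉ convexHull ℝ (ρ : Set E)) :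
    ∃ σ, IsLowerFacet s h σ ∧ σ.card = Module.finrank ℝ E + 1 ∧
      x ∈ convexHull ℝ (σ : Set E) := by
  classical
  obtain ⟨w, hw0, hw1, hwx, hmin⟩ := exists_weights_isMin s h hxs
  set σ := s.filter (fun y => w y ≠ 0)
  have hσs : σ ⊆ s := Finset.filter_subset _ _
  have hpos : ∀ y ∈ σ, 0 < w y := fun y hy =>
    (hw0 y (hσs hy)).lt_of_ne' (Finset.mem_filter.1 hy).2
  have hxσ : x ∈ convexHull ℝ (σ : Set E) := hwx ▸ mem_convexHull_filter_ne_zero hw0 hw1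
  have key : ∀ τ ⊆ σ, ∀ p ∈ s, p ∉ τ → p ∈ affineSpan ℝ (τ : Set E) → ∀ ℓ : E →ᵃ[ℝ] ℝ,
      (∀ t ∈ τ, ℓ t = h t) → ℓ p < h p ∧ p ∉ σ := by
    intro τ hτ p hps hpτ hp ℓ hℓ
    obtain ⟨μ, hμ1, hμp⟩ := Finset.exists_weights_of_mem_affineSpan hp
    let d : E → ℝ := fun y => (if y = p then 1 else 0) - if y ∈ τ then μ y else 0
    have hτs : s ∩ τ = τ := Finset.inter_eq_right.2 (hτ.trans hσs)
    have hd1 : ∑ y ∈ s, d y = 0 := by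
      simp [d, Finset.sum_sub_distrib, hps, hτs, hμ1, Finset.sum_ite_mem]
    have hd : ∑ y ∈ s, d y • y = 0 := by
      simp [d, sub_smul, ite_smul, Finset.sum_sub_distrib, hps, hτs, hμp, Finset.sum_ite_mem]
    have hdh : ∑ y ∈ s, d y * h y = h p - ℓ p := by
      have hℓp : ℓ p = ∑ y ∈ τ, μ y * h y := by
        rw [← hμp, AffineMap.map_sum_smul hμ1]
        exact Finset.sum_congr rfl fun y hy => by rw [hℓ y hy]
      simp [hℓp, d, sub_mul, ite_mul, Finset.sum_sub_distrib, hps, hτs, Finset.sum_ite_mem]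
    have hmin' : ∀ w' : E → ℝ, (∀ y ∈ s, 0 ≤ w' y) → ∑ y ∈ s, w' y = ∑ y ∈ s, w y →
        ∑ y ∈ s, w' y • y = ∑ y ∈ s, w y • y → ∑ y ∈ s, w y * h y ≤ ∑ y ∈ s, w' y * h y := by
      rw [hw1, hwx]; exact hmin
    have hne := hh τ (hτ.trans hσs) p hps hpτ hp ℓ hℓ
    have hdτ : ∀ y, d y ≠ 0 → y ≠ p → y ∈ τ := by
      intro y hy hyp
      by_contra hyτ
      simp [d, hyp, hyτ] at hy
    have hle : ℓ p < h p := by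
      refine lt_of_le_of_ne (sub_nonneg.1 ?_) hne
      rw [← hdh]
      refine sum_mul_nonneg_of_isMin hw0 hmin' hd1 hd fun y _ hy => hpos y (hτ (hdτ y hy.ne ?_))
      rintro rfl
      simp [d, hpτ] at hy
      linarith
    refine ⟨hle, fun hpσ => ?_⟩
    have := sum_mul_nonneg_of_isMin (d := -d) hw0 hmin' (by simp [hd1]) (by simp [hd])
      fun y _ hy => by
        by_cases hyp : y = p
        · exact hyp ▸ hpos p hpσ
        · exact hpos y (hτ (hdτ y (by simpa using hy.ne) hyp))
    simp only [Pi.neg_apply, neg_mul, Finset.sum_neg_distrib, hdh] at this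
    linarith
  obtain ⟨τ', hτσ, hspan, hind⟩ := exists_affineIndependent ℝ E (σ : Set E)
  obtain ⟨τ, rfl⟩ := (σ.finite_toSet.subset hτσ).exists_finset_coe
  have hτσ : τ ⊆ σ := by exact_mod_cast hτσ
  obtain ⟨ℓ, hℓ⟩ := hind.exists_affineMap_eqOn h
  have hτ : τ = σ := by
    refine hτσ.antisymm fun p hp => ?_
    by_contra hpτ
    exact (key τ hτσ p (hσs hp) hpτ (hspan ▸ subset_affineSpan ℝ _ hp) ℓ hℓ).2 hp
  rw [hτ] at hind hℓ
  have hcard : σ.card = Module.finrank ℝ E + 1 := by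
    refine le_antisymm ?_ (not_lt.1 fun hlt => hx σ hσs hlt hxσ)
    have := hind.card_le_finrank_succ
    rw [← Nat.card_eq_fintype_card, Nat.card_coe_set_eq, Set.ncard_coe_finset] at this
    exact this.trans (Nat.succ_le_succ (Submodule.finrank_le _))
  have htop : affineSpan ℝ (σ : Set E) = ⊤ := by
    have := hind.affineSpan_eq_top_iff_card_eq_finrank_add_one.2
      (by rw [← Nat.card_eq_fintype_card, Nat.card_coe_set_eq, Set.ncard_coe_finset, hcard])
    simpa using this
  exact ⟨σ, ⟨hσs, ℓ, hℓ, fun p hp hpσ =>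
    (key σ subset_rfl p hp hpσ (htop ▸ AffineSubspace.mem_top ℝ E p) ℓ hℓ).1⟩, hcard, hxσ⟩

end

section
variable {E : Type*} [NormedAddCommGroup E] [NormedSpace ℝ E] [FiniteDimensional ℝ E]
  [MeasurableSpace E] [BorelSpace E]

theorem addHaar_convexHull_eq_zero_of_card_lt (μ : Measure E) [μ.IsAddHaarMeasure] {ρ : Finset E}
    (hρ : ρ.card < Module.finrank ℝ E + 1) : μ (convexHull ℝ (ρ : Set E)) = 0 := by
  refine measure_mono_null (convexHull_subset_affineSpan _)
    (Measure.addHaar_affineSubspace μ _ fun htop => ?_)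
  obtain ⟨τ', hτρ, hspan, hind⟩ := exists_affineIndependent ℝ E (ρ : Set E)
  obtain ⟨τ, rfl⟩ := (ρ.finite_toSet.subset hτρ).exists_finset_coe
  have hτρ : τ ⊆ ρ := by exact_mod_cast hτρ
  have hc := hind.affineSpan_eq_top_iff_card_eq_finrank_add_one.1
    (by simpa using hspan.trans htop)
  rw [← Nat.card_eq_fintype_card, Nat.card_coe_set_eq, Set.ncard_coe_finset] at hc
  have := Finset.card_le_card hτρ
  omega

/-- A polytope is, up to null sets, a disjoint union of simplices spanned by its vertices. -/
theorem exists_addHaar_convexHull_eq_sum (μ : Measure E) [μ.IsAddHaarMeasure] (s : Finset E) :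
    ∃ T : Finset (Finset E), (∀ σ ∈ T, σ ⊆ s ∧ σ.card = Module.finrank ℝ E + 1) ∧
      μ (convexHull ℝ (s : Set E)) = ∑ σ ∈ T, μ (convexHull ℝ (σ : Set E)) := by
  classical
  obtain ⟨h, hh⟩ := exists_isGenericHeight s
  let T := s.powerset.filter fun σ => IsLowerFacet s h σ ∧ σ.card = Module.finrank ℝ E + 1
  let N : Set E := ⋃ ρ ∈ s.powerset.filter fun ρ => ρ.card < Module.finrank ℝ E + 1,
    convexHull ℝ (ρ : Set E)
  have hN : μ N = 0 := (measure_biUnion_null_iff (Finset.countable_toSet _)).2 fun ρ hρ =>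
    addHaar_convexHull_eq_zero_of_card_lt μ (Finset.mem_filter.1 hρ).2
  have hN' : ∀ x ∉ N, ∀ ρ ⊆ s, ρ.card < Module.finrank ℝ E + 1 →
      x ∉ convexHull ℝ (ρ : Set E) := fun x hx ρ hρ hc hxρ =>
    hx (Set.mem_biUnion (Finset.mem_filter.2 ⟨Finset.mem_powerset.2 hρ, hc⟩) hxρ)
  have hT : ∀ σ ∈ T, IsLowerFacet s h σ ∧ σ.card = Module.finrank ℝ E + 1 := fun σ hσ =>
    (Finset.mem_filter.1 hσ).2
  refine ⟨T, fun σ hσ => ⟨(hT σ hσ).1.1, (hT σ hσ).2⟩, ?_⟩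
  rw [← measure_biUnion_finset₀]
  · refine le_antisymm ?_ (measure_mono (Set.iUnion₂_subset fun σ hσ =>
      convexHull_mono (Finset.coe_subset.2 (hT σ hσ).1.1)))
    refine (measure_mono (t := (⋃ σ ∈ T, convexHull ℝ (σ : Set E)) ∪ N) fun x hxs => ?_).trans
      ((measure_union_le _ _).trans_eq (by rw [hN, add_zero]))
    by_cases hx : x ∈ N
    · exact Or.inr hx
    · obtain ⟨σ, hσ, hc, hxσ⟩ := exists_isLowerFacet_mem hh hxs (hN' x hx)
      exact Or.inl (Set.mem_biUnion
        (Finset.mem_filter.2 ⟨Finset.mem_powerset.2 hσ.1, hσ, hc⟩) hxσ)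
  · intro σ hσ τ hτ hne
    refine measure_mono_null (fun x hx => ?_) hN
    by_contra hxN
    obtain ⟨hσ, hσc⟩ := hT σ hσ
    obtain ⟨hτ, hτc⟩ := hT τ hτ
    exact hne (hσ.eq_of_mem hτ (hσc.trans hτc.symm) (hσc ▸ hN' x hxN) hx.1 hx.2)
  · exact fun σ _ => (σ.finite_toSet.isClosed_convexHull ℝ).measurableSet.nullMeasurableSet

end

/-- The corner simplex `{x ≥ 0, ∑ xᵢ ≤ r}`. -/
def cornerSimplex (n : ℕ) (r : ℝ) : Set (Fin n → ℝ) := {x | (∀ i, 0 ≤ x i) ∧ ∑ i, x i ≤ r}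

theorem measurableSet_cornerSimplex (n : ℕ) (r : ℝ) : MeasurableSet (cornerSimplex n r) := by
  unfold cornerSimplex
  measurability

theorem volume_cornerSimplex (n : ℕ) {r : ℝ} (hr : 0 ≤ r) :
    volume (cornerSimplex n r) = ENNReal.ofReal (r ^ n / n.factorial) := by
  induction n generalizing r with
  | zero =>
    have : cornerSimplex 0 r = Set.univ := by simp [cornerSimplex, hr]
    simp [this, volume_pi]
  | succ n ih =>
    have hmp := (volume_preserving_piFinSuccAbove (fun _ : Fin (n + 1) => ℝ) 0).symm
    rw [← hmp.measure_preimage (measurableSet_cornerSimplex _ _).nullMeasurableSet,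
      Measure.volume_eq_prod, Measure.prod_apply
        ((measurableSet_cornerSimplex _ _).preimage hmp.measurable)]
    have hslice : ∀ t : ℝ, volume (Prod.mk t ⁻¹' ((MeasurableEquiv.piFinSuccAbove
        (fun _ : Fin (n + 1) => ℝ) 0).symm ⁻¹' cornerSimplex (n + 1) r)) =
        (Set.Icc 0 r).indicator (fun t => ENNReal.ofReal ((r - t) ^ n / n.factorial)) t := by
      intro t
      have hset : Prod.mk t ⁻¹' ((MeasurableEquiv.piFinSuccAbove
          (fun _ : Fin (n + 1) => ℝ) 0).symm ⁻¹' cornerSimplex (n + 1) r) =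
          {y | 0 ≤ t ∧ y ∈ cornerSimplex n (r - t)} := by
        ext y
        simp [cornerSimplex, Fin.forall_fin_succ, Fin.sum_univ_succ, Fin.insertNthEquiv,
          le_sub_iff_add_le', and_assoc]
      rw [hset]
      by_cases ht : t ∈ Set.Icc 0 r
      · rw [Set.indicator_of_mem ht, ← ih (sub_nonneg.2 ht.2)]
        simp [ht.1]
      · rw [Set.indicator_of_notMem ht]
        convert measure_empty (μ := volume)
        refine Set.eq_empty_of_forall_notMem fun y hy => ht ⟨hy.1, ?_⟩
        have := Finset.sum_nonneg fun i (_ : i ∈ Finset.univ) => hy.2.1 i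
        linarith [hy.2.2]
    simp_rw [hslice]
    rw [lintegral_indicator measurableSet_Icc, ← ofReal_integral_eq_lintegral_ofReal]
    · rw [integral_Icc_eq_integral_Ioc, ← intervalIntegral.integral_of_le hr,
        intervalIntegral.integral_comp_sub_left (fun u => u ^ n / n.factorial)]
      congr 1
      simp [Nat.factorial_succ]
      field_simp
    · exact (Continuous.integrableOn_Icc (by fun_prop))
    · filter_upwards [ae_restrict_mem measurableSet_Icc] with t ht
      have := sub_nonneg.2 ht.2
      positivity

theorem convexHull_range_eq_image_cornerSimplex {n : ℕ} (v : Fin (n + 1) → Fin n → ℝ) :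
    convexHull ℝ (Set.range v) = (fun y => v 0 + y) ''
      (Matrix.toLin' (Matrix.of fun i j : Fin n => v j.succ i - v 0 i) '' cornerSimplex n 1) := by
  have hlin : ∀ x : Fin n → ℝ,
      v 0 + Matrix.toLin' (Matrix.of fun i j : Fin n => v j.succ i - v 0 i) x =
        (1 - ∑ j, x j) • v 0 + ∑ j, x j • v j.succ := by
    intro x
    ext i
    simp only [Matrix.toLin'_apply, Matrix.mulVec, dotProduct, Matrix.of_apply, Pi.add_apply,
      Pi.smul_apply, Finset.sum_apply, smul_eq_mul, sub_mul, Finset.sum_sub_distrib, one_mul,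
      Finset.sum_mul, mul_comm (x _)]
    ring
  rw [Set.image_image]
  simp_rw [hlin]
  apply Set.Subset.antisymm
  · intro x hx
    obtain ⟨w, hw0, hw1, rfl⟩ : ∃ w : Fin (n + 1) → ℝ, (∀ i, 0 ≤ w i) ∧ ∑ i, w i = 1 ∧
        ∑ i, w i • v i = x := by
      have hv : Set.range v = Fintype.linearCombination ℝ v ''
          Set.range fun i => (Pi.single i 1 : Fin (n + 1) → ℝ) := by
        rw [← Set.range_comp]
        congr 1
        ext i : 1
        simp [Fintype.linearCombination_apply_single]
      rw [hv, ← LinearMap.image_convexHull, convexHull_rangle_single_eq_stdSimplex] at hx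
      obtain ⟨w, hw, rfl⟩ := hx
      exact ⟨w, hw.1, hw.2, rfl⟩
    rw [Fin.sum_univ_succ] at hw1
    refine ⟨fun j => w j.succ, ⟨fun j => hw0 _, by linarith [hw0 0]⟩, ?_⟩
    simp only
    rw [Fin.sum_univ_succ, ← hw1, add_sub_cancel_right]
  · rintro _ ⟨x, ⟨hx0, hx1⟩, rfl⟩
    refine mem_convexHull_of_exists_fintype (Fin.cons (1 - ∑ j, x j) x) v ?_ ?_
      (fun i => Set.mem_range_self i) ?_
    · simp [Fin.forall_fin_succ, hx0, hx1]
    · simp [Fin.sum_univ_succ]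
    · simp [Fin.sum_univ_succ]

theorem volume_convexHull_range {n : ℕ} (v : Fin (n + 1) → Fin n → ℝ) :
    volume (convexHull ℝ (Set.range v)) = ENNReal.ofReal
      (|(Matrix.of fun i j : Fin n => v j.succ i - v 0 i).det| / n.factorial) := by
  rw [convexHull_range_eq_image_cornerSimplex, Set.image_add_left, measure_preimage_add,
    Measure.addHaar_image_linearMap, volume_cornerSimplex n zero_le_one, LinearMap.det_toLin',
    ← ENNReal.ofReal_mul (abs_nonneg _), one_pow, mul_one_div]

theorem exists_factorial_mul_volume_lattice_simplex {n : ℕ} (z : Fin (n + 1) → Fin n → ℤ) :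
    ∃ m : ℕ, (n.factorial : ℝ) *
      (volume (convexHull ℝ (Set.range fun k i => (z k i : ℝ)))).toReal = m := by
  refine ⟨(Matrix.of fun i j : Fin n => z j.succ i - z 0 i).det.natAbs, ?_⟩
  have hdet : (Matrix.of fun i j : Fin n => ((z j.succ i : ℝ) - z 0 i)).det =
      ((Matrix.of fun i j : Fin n => z j.succ i - z 0 i).det : ℤ) := by
    rw [Int.cast_det]
    congr 1
    ext i j
    simp
  rw [volume_convexHull_range, ENNReal.toReal_ofReal (by positivity), hdet,
    mul_div_cancel₀ _ (by positivity), Nat.cast_natAbs, Int.cast_abs]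

/-- The normalized volume `n! · vol(conv S)` of a lattice polytope is a nonnegative
integer. -/
theorem normalized_volume_lattice_polytope_integer (n : ℕ) (hn : 1 ≤ n)
    (S : Set (Fin n → ℤ)) (hS : S.Finite) :
    ∃ m : ℕ,
      (Nat.factorial n : ℝ) *
        (volume (convexHull ℝ
          ((fun x : Fin n → ℤ => (fun i => (x i : ℝ))) '' S))).toReal = m := by
  obtain ⟨s, hs⟩ := (hS.image fun x : Fin n → ℤ => (fun i => (x i : ℝ))).exists_finset_coe
  obtain ⟨T, hT, hvol⟩ := exists_addHaar_convexHull_eq_sum volume s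
  have hint : ∀ σ ∈ T, ∃ m : ℕ, (Nat.factorial n : ℝ) *
      (volume (convexHull ℝ (σ : Set (Fin n → ℝ)))).toReal = m := by
    intro σ hσ
    obtain ⟨hσs, hcard⟩ := hT σ hσ
    rw [Module.finrank_fin_fun] at hcard
    let e := σ.equivFinOfCardEq hcard
    have hlat : ∀ k, ∃ z : Fin n → ℤ, (fun i => (z i : ℝ)) = (e.symm k : Fin n → ℝ) := by
      intro k
      have : (e.symm k : Fin n → ℝ) ∈ (s : Set (Fin n → ℝ)) := hσs (e.symm k).2
      rw [hs] at this
      obtain ⟨z, -, hz⟩ := this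
      exact ⟨z, hz⟩
    choose z hz using hlat
    have hrange : Set.range (fun k i => (z k i : ℝ)) = (σ : Set (Fin n → ℝ)) := by
      rw [show (fun k i => (z k i : ℝ)) = (↑) ∘ e.symm from funext hz,
        e.symm.surjective.range_comp]
      simp
    rw [← hrange]
    exact exists_factorial_mul_volume_lattice_simplex z
  choose! m hm using hint
  refine ⟨∑ σ ∈ T, m σ, ?_⟩
  rw [← hs, hvol, ENNReal.toReal_sum, Finset.mul_sum, Nat.cast_sum, Finset.sum_congr rfl hm]
  exact fun σ _ => (σ.finite_toSet.isCompact_convexHull ℝ).measure_ne_top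
end

section
/- Let n ≥ 1 and V > 0. Consider the collection of all polytopes P = conv(S) ⊂ ℝⁿ where S ⊂ ℤⁿ is finite, the interior of P is nonempty, and vol(P) ≤ V. Call two such polytopes P, P′ equivalent if there exist a matrix A ∈ GL(n,ℤ) (an integer matrix with determinant ±1) and t ∈ ℤⁿ such that P′ = {Ax + t : x ∈ P}. Then this collection contains only finitely many equivalence classes; i.e., there exists a finite family of such polytopes such that every polytope in the collection is equivalent to one in the family. -/
open MeasureTheory

/-- `P` is a full-dimensional integral polytope in `ℝⁿ` with volume at most `V`. -/
def IsBoundedLatticePolytope (n : ℕ) (V : ℝ) (P : Set (Fin n → ℝ)) : Prop :=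
  (∃ S : Set (Fin n → ℤ), S.Finite ∧
      P = convexHull ℝ ((fun x : Fin n → ℤ => (fun i => (x i : ℝ))) '' S)) ∧
    (interior P).Nonempty ∧ (volume P).toReal ≤ V

/-- `P` and `Q` are equivalent under the group `Aff(n,ℤ)` of integral affine
transformations `x ↦ Ax + t` with `A` an integer matrix of determinant `±1`. -/
def AffZEquiv (n : ℕ) (P Q : Set (Fin n → ℝ)) : Prop :=
  ∃ (A : Matrix (Fin n) (Fin n) ℤ) (t : Fin n → ℤ),
    (A.det = 1 ∨ A.det = -1) ∧
    Q = (fun x : Fin n → ℝ => (fun i => (∑ j, (A i j : ℝ) * x j) + (t i : ℝ))) '' P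

/-- `P` is the hull of lattice points `S` which, in the frame with origin `v` and integral
basis matrix `M`, has determinant `D`, residue `R` modulo `D`, and (scaled) coordinate set `T`. -/
def HasLatticeFrame {n : ℕ} (P : Set (Fin n → ℝ)) (D : ℤ) (R : Matrix (Fin n) (Fin n) ℤ)
    (T : Set (Fin n → ℤ)) : Prop :=
  ∃ (S : Set (Fin n → ℤ)) (v : Fin n → ℤ) (M : Matrix (Fin n) (Fin n) ℤ),
    P = convexHull ℝ ((fun x : Fin n → ℤ => (fun i => (x i : ℝ))) '' S) ∧
    M.det = D ∧ D ≠ 0 ∧ M.map (· % D) = R ∧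
    (fun x => M.adjugate.mulVec (x - v)) '' S = T

/-- Integer matrices with the same nonzero determinant that agree modulo that determinant
differ by left multiplication by a unimodular matrix. -/
theorem exists_det_one_mul_eq_of_emod_eq {n : ℕ} {M N : Matrix (Fin n) (Fin n) ℤ}
    (hM : M.det ≠ 0) (hdet : N.det = M.det) (hmod : M.map (· % M.det) = N.map (· % M.det)) :
    ∃ A : Matrix (Fin n) (Fin n) ℤ, A.det = 1 ∧ A * M = N := by
  have hdvd : ∀ i j, M.det ∣ N i j - M i j := fun i j =>
    Int.ModEq.dvd (congrFun (congrFun hmod i) j)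
  choose K hK using hdvd
  have hmul : (1 + Matrix.of K * M.adjugate) * M = N := by
    rw [add_mul, one_mul, mul_assoc, Matrix.adjugate_mul]
    ext i j
    simp only [Matrix.add_apply, Matrix.mul_smul, mul_one, Matrix.smul_apply, Matrix.of_apply,
      smul_eq_mul, ← hK]
    ring
  refine ⟨_, ?_, hmul⟩
  have h := congrArg Matrix.det hmul
  rw [Matrix.det_mul, hdet] at h
  exact mul_right_cancel₀ hM (h.trans (one_mul _).symm)

theorem image_convexHull_intCast {n : ℕ} (A : Matrix (Fin n) (Fin n) ℤ) (t : Fin n → ℤ)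
    (S : Set (Fin n → ℤ)) :
    (fun x : Fin n → ℝ => (fun i => (∑ j, (A i j : ℝ) * x j) + (t i : ℝ))) ''
        convexHull ℝ ((fun x : Fin n → ℤ => (fun i => (x i : ℝ))) '' S) =
      convexHull ℝ ((fun x : Fin n → ℤ => (fun i => (x i : ℝ))) ''
        ((fun x => A.mulVec x + t) '' S)) := by
  let f : (Fin n → ℝ) →ᵃ[ℝ] (Fin n → ℝ) :=
    (Matrix.toLin' (A.map (Int.cast : ℤ → ℝ))).toAffineMap +
      AffineMap.const ℝ (Fin n → ℝ) (fun i => (t i : ℝ))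
  have hf : (fun x : Fin n → ℝ => (fun i => (∑ j, (A i j : ℝ) * x j) + (t i : ℝ))) = f := by
    ext x i
    simp [f, Matrix.mulVec, dotProduct]
  rw [hf, AffineMap.image_convexHull, ← hf, Set.image_image, Set.image_image]
  congr 2
  ext x i
  simp [Matrix.mulVec, dotProduct]

theorem HasLatticeFrame.affZEquiv {n : ℕ} {P Q : Set (Fin n → ℝ)} {D : ℤ}
    {R : Matrix (Fin n) (Fin n) ℤ} {T : Set (Fin n → ℤ)}
    (hP : HasLatticeFrame P D R T) (hQ : HasLatticeFrame Q D R T) : AffZEquiv n P Q := by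
  obtain ⟨S, v, M, rfl, rfl, hD, rfl, rfl⟩ := hP
  obtain ⟨S', v', N, rfl, hdet, -, hmod, hT⟩ := hQ
  obtain ⟨A, hA, rfl⟩ := exists_det_one_mul_eq_of_emod_eq hD hdet hmod.symm
  refine ⟨A, v' - A.mulVec v, Or.inl hA, ?_⟩
  rw [image_convexHull_intCast]
  have key : ∀ x x', (A * M).adjugate.mulVec (x' - v') = M.adjugate.mulVec (x - v) →
      A.mulVec x + (v' - A.mulVec v) = x' := by
    intro x x' h
    have h' := congrArg (A * M).mulVec h
    rw [Matrix.mulVec_mulVec, Matrix.mul_adjugate, hdet, Matrix.mulVec_mulVec, mul_assoc,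
      Matrix.mul_adjugate, Matrix.mul_smul, mul_one, Matrix.smul_mulVec, Matrix.smul_mulVec,
      Matrix.one_mulVec] at h'
    have h'' := smul_right_injective _ hD h'
    rw [Matrix.mulVec_sub] at h''
    rw [sub_eq_iff_eq_add.mp h'']
    abel
  congr 2
  ext x'
  constructor
  · intro hx'
    obtain ⟨x, hx, hxx'⟩ := hT.subset (Set.mem_image_of_mem _ hx')
    exact ⟨x, hx, key x x' hxx'.symm⟩
  · rintro ⟨x, hx, rfl⟩
    obtain ⟨x', hx', hxx'⟩ := hT.superset (Set.mem_image_of_mem _ hx)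
    rw [← key x x' hxx'] at hx'
    exact hx'

/-- A convex set containing `v` and the points `w j` has volume at least `n⁻ⁿ` times the
determinant of the edge vectors `w j - v`. -/
theorem abs_det_le_of_convex {n : ℕ} (hn : 1 ≤ n) {P : Set (Fin n → ℝ)} (hP : Convex ℝ P)
    (hfin : volume P ≠ ⊤) {v : Fin n → ℝ} {w : Fin n → Fin n → ℝ} (hv : v ∈ P)
    (hw : ∀ j, w j ∈ P) :
    |(Matrix.of fun i j => w j i - v i).det| ≤ n ^ n * (volume P).toReal := by
  have hn0 : (0 : ℝ) < n := by exact_mod_cast hn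
  set M : Matrix (Fin n) (Fin n) ℝ := Matrix.of fun i j => w j i - v i with hM
  let box : Set (Fin n → ℝ) := Set.Icc 0 fun _ => (n : ℝ)⁻¹
  have hsub : (fun y => v + y) '' (Matrix.toLin' M '' box) ⊆ P := by
    rintro _ ⟨_, ⟨y, ⟨hy0, hy1⟩, rfl⟩, rfl⟩
    have hsum : ∑ j, y j ≤ 1 := by
      calc ∑ j, y j ≤ ∑ _j : Fin n, (n : ℝ)⁻¹ := Finset.sum_le_sum fun j _ => hy1 j
        _ = 1 := by simp [hn0.ne']
    have hmem := hP.sum_mem (t := Finset.univ)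
      (w := fun o : Option (Fin n) => o.elim (1 - ∑ j, y j) y)
      (z := fun o : Option (Fin n) => o.elim v w)
      (by rintro (_ | j) -
          · simpa using hsum
          · exact hy0 j)
      (by simp [Fintype.sum_option])
      (by rintro (_ | j) -
          · exact hv
          · exact hw j)
    convert hmem using 1
    ext i
    simp only [Fintype.sum_option, Option.elim, Pi.add_apply, Matrix.toLin'_apply, Matrix.mulVec,
      dotProduct, hM, Matrix.of_apply, Finset.sum_apply, Pi.smul_apply, smul_eq_mul, sub_mul,
      Finset.sum_sub_distrib, one_mul, Finset.sum_mul]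
    simp only [mul_comm]
    ring
  have hvol := ENNReal.toReal_mono hfin (measure_mono (μ := volume) hsub)
  rw [Set.image_add_left, measure_preimage_add, Measure.addHaar_image_linearMap,
    LinearMap.det_toLin', Real.volume_Icc_pi, ENNReal.toReal_mul,
    ENNReal.toReal_ofReal (abs_nonneg _)] at hvol
  simp only [Pi.zero_apply, sub_zero, Finset.prod_const, Finset.card_univ, Fintype.card_fin,
    ENNReal.toReal_pow, ENNReal.toReal_ofReal (inv_nonneg.mpr hn0.le)] at hvol
  calc |M.det| = n ^ n * (|M.det| * (n : ℝ)⁻¹ ^ n) := by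
        rw [inv_pow]; field_simp
    _ ≤ _ := by gcongr

/-- A set of lattice points with full-dimensional hull contains the vertices of a
nondegenerate simplex. -/
theorem exists_det_ne_zero_of_interior_nonempty {n : ℕ} {S : Set (Fin n → ℤ)}
    (h : (interior (convexHull ℝ
      ((fun x : Fin n → ℤ => (fun i => (x i : ℝ))) '' S))).Nonempty) :
    ∃ v ∈ S, ∃ w : Fin n → Fin n → ℤ, (∀ j, w j ∈ S) ∧
      (Matrix.of fun i j => w j i - v i).det ≠ 0 := by
  obtain ⟨v, hv⟩ : S.Nonempty := by
    have := h.mono interior_subset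
    rwa [convexHull_nonempty_iff, Set.image_nonempty] at this
  refine ⟨v, hv, ?_⟩
  let c : (Fin n → ℤ) → Fin n → ℝ := fun x i => x i
  have hspan : Submodule.span ℝ ((fun x => x -ᵥ c v) '' (c '' S)) = ⊤ := by
    rw [← vectorSpan_eq_span_vsub_set_right ℝ (Set.mem_image_of_mem c hv), ← direction_affineSpan,
      interior_convexHull_nonempty_iff_affineSpan_eq_top.mp h, AffineSubspace.direction_top]
  obtain ⟨f, hfmem, -, hf⟩ := Submodule.exists_fun_fin_finrank_span_eq ℝ
    ((fun x => x -ᵥ c v) '' (c '' S))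
  have hrank : n = Module.finrank ℝ (Submodule.span ℝ ((fun x => x -ᵥ c v) '' (c '' S))) := by
    rw [hspan, finrank_top, Module.finrank_fin_fun]
  let g : Fin n → Fin n → ℝ := f ∘ Fin.cast hrank
  have hg : LinearIndependent ℝ g := hf.comp _ (Fin.cast_injective hrank)
  have hgmem : ∀ j, ∃ x ∈ S, c x - c v = g j := by
    intro j
    obtain ⟨_, ⟨x, hx, rfl⟩, hxj⟩ := hfmem (Fin.cast hrank j)
    exact ⟨x, hx, hxj⟩
  choose w hwS hw using hgmem
  refine ⟨w, hwS, fun hdet => ?_⟩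
  have hunit : IsUnit (Matrix.of g) :=
    Matrix.linearIndependent_rows_iff_isUnit.mp hg
  rw [Matrix.isUnit_iff_isUnit_det] at hunit
  apply hunit.ne_zero
  have hcast : Matrix.of g =
      ((Matrix.of fun i j => w j i - v i).map (Int.castRingHom ℝ)).transpose := by
    ext i j
    simp [← hw, c]
  rw [hcast, Matrix.det_transpose, ← RingHom.mapMatrix_apply, ← RingHom.map_det, hdet, map_zero]

/-- A bounded-volume lattice polytope has a frame with bounded invariants, obtained from a
simplex of maximal volume with a fixed vertex. -/
theorem IsBoundedLatticePolytope.exists_hasLatticeFrame {n : ℕ} (hn : 1 ≤ n) {V : ℝ}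
    {P : Set (Fin n → ℝ)} (hP : IsBoundedLatticePolytope n V P) :
    ∃ D ∈ Set.Icc (-⌊n ^ n * V⌋) ⌊n ^ n * V⌋,
      ∃ R ∈ {R : Matrix (Fin n) (Fin n) ℤ | ∀ i j, R i j ∈ Set.Icc 0 ⌊n ^ n * V⌋},
        ∃ T ∈ 𝒫 (Set.Icc (fun _ : Fin n => -⌊n ^ n * V⌋) fun _ => ⌊n ^ n * V⌋),
          HasLatticeFrame P D R T := by
  obtain ⟨⟨S, hS, rfl⟩, hint, hvol⟩ := hP
  obtain ⟨v, hv, w₀, hw₀, hdet₀⟩ := exists_det_ne_zero_of_interior_nonempty hint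
  let edges : (Fin n → Fin n → ℤ) → Matrix (Fin n) (Fin n) ℤ :=
    fun w => Matrix.of fun i j => w j i - v i
  obtain ⟨w, hw, hmax⟩ := Set.exists_max_image (Set.univ.pi fun _ : Fin n => S)
    (fun w => |(edges w).det|) (Set.Finite.pi fun _ => hS)
    ⟨w₀, fun j _ => hw₀ j⟩
  set M := edges w with hM
  have hD : M.det ≠ 0 := abs_pos.mp ((abs_pos.mpr hdet₀).trans_le (hmax w₀ fun j _ => hw₀ j))
  have hmem : ∀ x ∈ S, (fun i => (x i : ℝ)) ∈ convexHull ℝ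
      ((fun x : Fin n → ℤ => (fun i => (x i : ℝ))) '' S) := fun x hx =>
    subset_convexHull ℝ _ (Set.mem_image_of_mem _ hx)
  have hbound : |M.det| ≤ ⌊n ^ n * V⌋ := by
    rw [Int.le_floor]
    have hle := abs_det_le_of_convex hn (convex_convexHull ℝ _)
      ((hS.image _).isCompact_convexHull (𝕜 := ℝ)).measure_lt_top.ne
      (hmem v hv) (fun j => hmem (w j) (hw j trivial))
    have hcast : (Matrix.of fun i j => ((w j i : ℤ) : ℝ) - ((v i : ℤ) : ℝ)).det =
        ((M.det : ℤ) : ℝ) := by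
      rw [← eq_intCast (Int.castRingHom ℝ), RingHom.map_det, RingHom.mapMatrix_apply]
      congr 1
      ext i j
      simp [hM, edges]
    rw [hcast] at hle
    rw [Int.cast_abs]
    exact hle.trans (by gcongr)
  refine ⟨M.det, abs_le.mp hbound, _, fun i j => ⟨Int.emod_nonneg _ hD,
    ((Int.emod_lt_abs _ hD).trans_le hbound).le⟩, _, ?_, S, v, M, rfl, rfl, hD, rfl, rfl⟩
  rintro _ ⟨x, hx, rfl⟩
  have hcoord : ∀ i, |M.adjugate.mulVec (x - v) i| ≤ ⌊n ^ n * V⌋ := by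
    intro i
    rw [← Matrix.cramer_eq_adjugate_mulVec, Matrix.cramer_apply]
    have hupd : M.updateCol i (x - v) = edges (Function.update w i x) := by
      ext k j
      by_cases hj : j = i
      · subst hj; simp [edges]
      · simp [hM, edges, hj]
    rw [hupd]
    refine (hmax _ fun j _ => ?_).trans hbound
    by_cases hj : j = i
    · subst hj; simpa using hx
    · simpa [hj] using hw j trivial
  exact ⟨fun i => (abs_le.mp (hcoord i)).1, fun i => (abs_le.mp (hcoord i)).2⟩

/-- There are only finitely many integral polytopes with nonempty interior and
volume at most `V`, up to integral affine equivalence. -/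
theorem finitely_many_lattice_polytopes_of_bounded_volume (n : ℕ) (hn : 1 ≤ n)
    (V : ℝ) (hV : 0 < V) :
    ∃ F : Finset (Set (Fin n → ℝ)),
      (∀ Q ∈ F, IsBoundedLatticePolytope n V Q) ∧
      ∀ P : Set (Fin n → ℝ), IsBoundedLatticePolytope n V P →
        ∃ Q ∈ F, AffZEquiv n P Q := by
  classical
  have hR : {R : Matrix (Fin n) (Fin n) ℤ | ∀ i j, R i j ∈ Set.Icc 0 ⌊n ^ n * V⌋}.Finite :=
    Set.Finite.pi' fun _ => Set.Finite.pi' fun _ => Set.finite_Icc _ _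
  have hK := (Set.finite_Icc (-⌊n ^ n * V⌋) ⌊n ^ n * V⌋).prod (hR.prod
    (Set.finite_Icc (fun _ : Fin n => -⌊n ^ n * V⌋) fun _ => ⌊n ^ n * V⌋).finite_subsets)
  let good : ℤ × Matrix (Fin n) (Fin n) ℤ × Set (Fin n → ℤ) → Set (Fin n → ℝ) → Prop :=
    fun k P => IsBoundedLatticePolytope n V P ∧ HasLatticeFrame P k.1 k.2.1 k.2.2
  let rep : ℤ × Matrix (Fin n) (Fin n) ℤ × Set (Fin n → ℤ) → Set (Fin n → ℝ) :=
    fun k => Classical.epsilon (good k)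
  refine ⟨(hK.toFinset.filter fun k => ∃ P, good k P).image rep, ?_, fun P hP => ?_⟩
  · intro Q hQ
    obtain ⟨k, hk, rfl⟩ := Finset.mem_image.mp hQ
    exact (Classical.epsilon_spec (Finset.mem_filter.mp hk).2).1
  · obtain ⟨D, hD, R, hR, T, hT, hframe⟩ := hP.exists_hasLatticeFrame hn
    have hex : ∃ P, good (D, R, T) P := ⟨P, hP, hframe⟩
    refine ⟨rep (D, R, T), Finset.mem_image_of_mem _ (Finset.mem_filter.mpr
      ⟨hK.mem_toFinset.mpr ⟨hD, hR, hT⟩, hex⟩), ?_⟩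
    exact hframe.affZEquiv (Classical.epsilon_spec hex).2
end

section
/- Let d ≥ 3 and let v₁, …, v_d ∈ ℤ² be distinct points that are the vertices of the convex polygon D = conv{v₁, …, v_d} ⊂ ℝ² (i.e., no v_i lies in the convex hull of the others, and D has nonempty interior). Assume that the only points of ℤ² lying on the topological boundary of D are the vertices v₁, …, v_d. Then vol(D) ≥ 3(d − 4)/2, where vol denotes Lebesgue measure on ℝ². -/
open MeasureTheory

/-- The inclusion of the integer lattice into the real plane. -/
def latticePoint (p : Fin 2 → ℤ) : Fin 2 → ℝ := fun j => (p j : ℝ)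

/-- Twice the signed area of the triangle `a b c`. -/
def cross {R : Type*} [CommRing R] (a b c : Fin 2 → R) : R :=
  (b 0 - a 0) * (c 1 - a 1) - (b 1 - a 1) * (c 0 - a 0)

theorem cross_latticePoint (a b c : Fin 2 → ℤ) :
    cross (latticePoint a) (latticePoint b) (latticePoint c) = ((cross a b c : ℤ) : ℝ) := by
  simp [cross, latticePoint]

/-- The linear part of the affine function `cross a b`. -/
def crossLinear (a b : Fin 2 → ℝ) : (Fin 2 → ℝ) →ₗ[ℝ] ℝ :=
  (b 0 - a 0) • LinearMap.proj 1 - (b 1 - a 1) • LinearMap.proj 0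

theorem cross_eq_crossLinear_sub (a b c : Fin 2 → ℝ) :
    cross a b c = crossLinear a b c - crossLinear a b a := by
  simp [cross, crossLinear]
  ring

theorem volume_levelSet_eq_zero (f : (Fin 2 → ℝ) →ₗ[ℝ] ℝ) (hf : f ≠ 0) (c : ℝ) :
    volume {x | f x = c} = 0 := by
  by_cases h : ∃ y, f y = c
  · obtain ⟨y, hy⟩ := h
    have hset : {x | f x = c} = (fun x => x + -y) ⁻¹' (LinearMap.ker f : Set (Fin 2 → ℝ)) := by
      ext x
      simp [hy, add_neg_eq_zero]
    rw [hset, measure_preimage_add_right]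
    exact Measure.addHaar_submodule _ _ (fun h => hf (LinearMap.ker_eq_top.mp h))
  · have hset : {x | f x = c} = ∅ := by
      ext x
      simpa using fun hx => h ⟨x, hx⟩
    simp [hset]

/-- Convex hulls of two finite sets separated by a line overlap in a null set. -/
theorem volume_convexHull_add_le (f : (Fin 2 → ℝ) →ₗ[ℝ] ℝ) (hf : f ≠ 0) (c : ℝ)
    {s t u : Set (Fin 2 → ℝ)} (hu : u.Finite) (hsu : s ⊆ u) (htu : t ⊆ u)
    (hs : ∀ x ∈ s, c ≤ f x) (ht : ∀ x ∈ t, f x ≤ c) :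
    volume.real (convexHull ℝ s) + volume.real (convexHull ℝ t) ≤
      volume.real (convexHull ℝ u) := by
  have hs' : convexHull ℝ s ⊆ {x | c ≤ f x} :=
    convexHull_min hs (convex_halfSpace_ge f.isLinear c)
  have ht' : convexHull ℝ t ⊆ {x | f x ≤ c} :=
    convexHull_min ht (convex_halfSpace_le f.isLinear c)
  have hfin : ∀ w : Set (Fin 2 → ℝ), w.Finite → volume (convexHull ℝ w) ≠ ⊤ :=
    fun w hw => (Set.Finite.isCompact_convexHull ℝ hw).measure_lt_top.ne
  have hdisj : AEDisjoint volume (convexHull ℝ s) (convexHull ℝ t) :=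
    measure_mono_null (fun x hx => le_antisymm (ht' hx.2) (hs' hx.1))
      (volume_levelSet_eq_zero f hf c)
  have hmeas : NullMeasurableSet (convexHull ℝ t) (volume : Measure (Fin 2 → ℝ)) :=
    (Set.Finite.isCompact_convexHull ℝ (hu.subset htu)).isClosed.measurableSet.nullMeasurableSet
  rw [measureReal_def, measureReal_def, measureReal_def,
    ← ENNReal.toReal_add (hfin s (hu.subset hsu)) (hfin t (hu.subset htu)),
    ← measure_union₀ hmeas hdisj]
  exact ENNReal.toReal_mono (hfin u hu)
    (measure_mono (Set.union_subset (convexHull_mono hsu) (convexHull_mono htu)))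

theorem half_le_volume_stdTriangle :
    (1 / 2 : ℝ) ≤ volume.real (convexHull ℝ {(0 : Fin 2 → ℝ), ![1, 0], ![0, 1]}) := by
  set T := convexHull ℝ {(0 : Fin 2 → ℝ), ![1, 0], ![0, 1]} with hT
  have hmem : ∀ x : Fin 2 → ℝ, 0 ≤ x 0 → 0 ≤ x 1 → x 0 + x 1 ≤ 1 → x ∈ T := by
    intro x h0 h1 h2
    have hx : x = (1 - x 0 - x 1) • (0 : Fin 2 → ℝ) + x 0 • ![1, 0] + x 1 • ![0, 1] := by
      ext i
      fin_cases i <;> simp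
    rw [hx, hT, convexHull_insert (by simp), convexHull_pair]
    rw [mem_convexJoin]
    refine ⟨0, by simp, ?_⟩
    by_cases hs : x 0 + x 1 = 0
    · have e0 : x 0 = 0 := by linarith
      have e1 : x 1 = 0 := by linarith
      refine ⟨![1, 0], left_mem_segment _ _ _, ?_⟩
      simp [e0, e1, left_mem_segment]
    · have hpos : 0 < x 0 + x 1 := lt_of_le_of_ne (by linarith) (Ne.symm hs)
      refine ⟨(x 0 / (x 0 + x 1)) • ![1, 0] + (x 1 / (x 0 + x 1)) • ![0, 1],
        ⟨_, _, by positivity, by positivity, by field_simp, rfl⟩,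
        ⟨1 - x 0 - x 1, x 0 + x 1, by linarith, hpos.le, by ring, ?_⟩⟩
      ext i
      fin_cases i <;> simp <;> field_simp
  have hfin : volume T ≠ ⊤ :=
    (Set.Finite.isCompact_convexHull ℝ (by simp)).measure_lt_top.ne
  have hcover : Set.Icc (0 : Fin 2 → ℝ) 1 ⊆ T ∪ (fun x => (1 : Fin 2 → ℝ) - x) ⁻¹' T := by
    intro x hx
    have h0 := hx.1 0
    have h1 := hx.1 1
    have h2 := hx.2 0
    have h3 := hx.2 1
    simp only [Pi.zero_apply, Pi.one_apply] at h0 h1 h2 h3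
    by_cases h : x 0 + x 1 ≤ 1
    · exact Or.inl (hmem x h0 h1 h)
    · refine Or.inr (hmem _ ?_ ?_ ?_) <;> simp only [Pi.sub_apply, Pi.one_apply] <;> linarith
  have hrefl : volume ((fun x => (1 : Fin 2 → ℝ) - x) ⁻¹' T) = volume T :=
    (Measure.measurePreserving_sub_left volume (1 : Fin 2 → ℝ)).measure_preimage
      (Set.Finite.isCompact_convexHull ℝ (by simp)).isClosed.measurableSet.nullMeasurableSet
  have hvol : (1 : ENNReal) ≤ volume T + volume T := by
    calc (1 : ENNReal) = volume (Set.Icc (0 : Fin 2 → ℝ) 1) := by simp [Real.volume_Icc_pi]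
      _ ≤ volume (T ∪ (fun x => (1 : Fin 2 → ℝ) - x) ⁻¹' T) := measure_mono hcover
      _ ≤ volume T + volume ((fun x => (1 : Fin 2 → ℝ) - x) ⁻¹' T) := measure_union_le _ _
      _ = volume T + volume T := by rw [hrefl]
  have := ENNReal.toReal_mono (by simp [hfin]) hvol
  rw [ENNReal.toReal_add hfin hfin, ENNReal.toReal_one] at this
  rw [measureReal_def]
  linarith

open scoped Pointwise in
theorem abs_cross_div_two_le_volume (a b c : Fin 2 → ℝ) :
    |cross a b c| / 2 ≤ volume.real (convexHull ℝ {a, b, c}) := by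
  let M : Matrix (Fin 2) (Fin 2) ℝ := !![b 0 - a 0, c 0 - a 0; b 1 - a 1, c 1 - a 1]
  have hM : M.det = cross a b c := by
    simp [M, Matrix.det_fin_two, cross]
    ring
  have himage : convexHull ℝ {a, b, c} = (fun x => a + x) ''
      (Matrix.toLin' M '' convexHull ℝ {(0 : Fin 2 → ℝ), ![1, 0], ![0, 1]}) := by
    rw [LinearMap.image_convexHull]
    have hset : ({a, b, c} : Set (Fin 2 → ℝ)) =
        a +ᵥ (Matrix.toLin' M '' {(0 : Fin 2 → ℝ), ![1, 0], ![0, 1]}) := by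
      have hb : a + M.mulVec ![1, 0] = b := by
        ext i
        fin_cases i <;> simp [M]
      have hc : a + M.mulVec ![0, 1] = c := by
        ext i
        fin_cases i <;> simp [M]
      rw [← Set.image_vadd, Set.image_image]
      simp only [Set.image_insert_eq, Set.image_singleton, Matrix.toLin'_apply, vadd_eq_add,
        Matrix.mulVec_zero, add_zero, hb, hc]
    rw [hset, convexHull_vadd]
    rfl
  have hvol : volume (convexHull ℝ {a, b, c}) = ENNReal.ofReal |cross a b c| *
      volume (convexHull ℝ {(0 : Fin 2 → ℝ), ![1, 0], ![0, 1]}) := by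
    rw [himage, Set.image_add_left, measure_preimage_add, Measure.addHaar_image_linearMap,
      LinearMap.det_toLin', hM]
  rw [measureReal_def, hvol, ENNReal.toReal_mul, ENNReal.toReal_ofReal (abs_nonneg _)]
  have := mul_le_mul_of_nonneg_left half_le_volume_stdTriangle (abs_nonneg (cross a b c))
  rw [measureReal_def] at this
  linarith

/-- In a lattice chain that turns strictly in the direction given by the sign `σ`, the edge
`p m — p (m + 1)` has cross product at least one with each of the `m` preceding edges. -/
theorem le_cross_of_chain (σ : ℤ) (p : ℕ → Fin 2 → ℤ) (m : ℕ)
    (hx : ∀ i j, i < j → j ≤ m + 1 → p i 0 < p j 0)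
    (hO : ∀ i j k, i < j → j < k → k ≤ m + 1 → 0 < σ * cross (p i) (p j) (p k)) :
    (m : ℤ) ≤ σ * cross (p 0) (p m) (p (m + 1)) := by
  have hedge : ∀ j, j < m → 0 < σ * ((p (j + 1) 0 - p j 0) * (p (m + 1) 1 - p m 1) -
      (p (j + 1) 1 - p j 1) * (p (m + 1) 0 - p m 0)) := by
    intro j hj
    rcases Nat.lt_or_ge (j + 1) m with h | h
    · have h1 := hO j (j + 1) m (by omega) h (by omega)
      have h2 := hO (j + 1) m (m + 1) h (by omega) le_rfl
      have x1 := hx j (j + 1) (by omega) (by omega)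
      have x2 := hx (j + 1) m h (by omega)
      have x3 := hx m (m + 1) (by omega) le_rfl
      refine pos_of_mul_pos_right (a := p m 0 - p (j + 1) 0) ?_ (by linarith)
      have key := add_pos (mul_pos (sub_pos.mpr x3) h1) (mul_pos (sub_pos.mpr x1) h2)
      refine key.trans_eq ?_
      simp only [cross]
      ring
    · obtain rfl : m = j + 1 := by omega
      have h1 := hO j (j + 1) (j + 1 + 1) (by omega) (by omega) le_rfl
      refine h1.trans_eq ?_
      simp only [cross]
      ring
  have hsum : ∀ j, j ≤ m → (j : ℤ) ≤ σ * ((p j 0 - p 0 0) * (p (m + 1) 1 - p m 1) -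
      (p j 1 - p 0 1) * (p (m + 1) 0 - p m 0)) := by
    intro j
    induction j with
    | zero => simp
    | succ j ih =>
      intro hj
      have h1 := ih (by omega)
      have h2 := hedge j (by omega)
      push_cast
      linarith
  refine (hsum m le_rfl).trans_eq ?_
  simp only [cross]
  ring

/-- A strictly turning lattice chain with `m` edges, monotone in the first coordinate, bounds a
region of area at least half of `m.choose 2`. -/
theorem chain_area_le_volume (σ : ℤ) (hσ : |σ| = 1) (p : ℕ → Fin 2 → ℤ) (m : ℕ)
    (hx : ∀ i j, i < j → j ≤ m → p i 0 < p j 0)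
    (hO : ∀ i j k, i < j → j < k → k ≤ m → 0 < σ * cross (p i) (p j) (p k)) :
    (m * (m - 1) / 4 : ℝ) ≤
      volume.real (convexHull ℝ ((fun i => latticePoint (p i)) '' Set.Iic m)) := by
  induction m with
  | zero => simp
  | succ m ih =>
    rcases Nat.eq_zero_or_pos m with rfl | hm
    · simp
    have ih' := ih (fun i j h h' => hx i j h (by omega))
      (fun i j k h h' h'' => hO i j k h h' (by omega))
    let f : (Fin 2 → ℝ) →ₗ[ℝ] ℝ :=
      (-(σ : ℝ)) • crossLinear (latticePoint (p 0)) (latticePoint (p m))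
    have hfc : ∀ q, f (latticePoint q) - f (latticePoint (p 0)) =
        ((-(σ * cross (p 0) (p m) q) : ℤ) : ℝ) := by
      intro q
      have h := cross_eq_crossLinear_sub (latticePoint (p 0)) (latticePoint (p m)) (latticePoint q)
      rw [cross_latticePoint] at h
      push_cast
      rw [h]
      simp only [f, LinearMap.smul_apply, smul_eq_mul]
      ring
    have hlast := hO 0 m (m + 1) hm (by omega) le_rfl
    have hf : f ≠ 0 := by
      intro h0
      have h := hfc (p (m + 1))
      rw [h0] at h
      simp only [LinearMap.zero_apply, sub_zero] at h
      have h' : -(σ * cross (p 0) (p m) (p (m + 1))) = 0 := by exact_mod_cast h.symm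
      omega
    have hsplit := volume_convexHull_add_le f hf (f (latticePoint (p 0)))
      (s := (fun i => latticePoint (p i)) '' Set.Iic m)
      (t := {latticePoint (p 0), latticePoint (p m), latticePoint (p (m + 1))})
      (u := (fun i => latticePoint (p i)) '' Set.Iic (m + 1))
      ((Set.finite_Iic _).image _)
      (Set.image_mono (Set.Iic_subset_Iic.mpr (by omega)))
      (by
        rintro x (rfl | rfl | rfl)
        · exact ⟨0, by simp, rfl⟩
        · exact ⟨m, by simp, rfl⟩
        · exact ⟨m + 1, by simp, rfl⟩)
      (by
        rintro _ ⟨i, hi, rfl⟩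
        rw [← sub_nonneg]
        simp only
        rw [hfc, Int.cast_nonneg_iff]
        have hi' : i ≤ m := hi
        rcases Nat.eq_zero_or_pos i with rfl | h0
        · simp [cross]
        rcases hi'.eq_or_lt with rfl | him
        · simp [cross, mul_comm]
        have h := hO 0 i m h0 him (by omega)
        have hswap : -(σ * cross (p 0) (p m) (p i)) = σ * cross (p 0) (p i) (p m) := by
          simp only [cross]
          ring
        omega)
      (by
        rintro x (rfl | rfl | rfl)
        · exact le_rfl
        · rw [← sub_nonpos, hfc]
          simp [cross, mul_comm]
        · rw [← sub_nonpos, hfc, Int.cast_nonpos]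
          omega)
    have htri := abs_cross_div_two_le_volume (latticePoint (p 0)) (latticePoint (p m))
      (latticePoint (p (m + 1)))
    rw [cross_latticePoint] at htri
    have hcross : (m : ℝ) ≤ |((cross (p 0) (p m) (p (m + 1)) : ℤ) : ℝ)| := by
      have h1 := le_cross_of_chain σ p m hx hO
      have h2 := h1.trans (le_abs_self _)
      rw [abs_mul, hσ, one_mul] at h2
      exact_mod_cast h2
    push_cast
    linarith

/-- A point lying weakly between two chords, both of which pass over its first coordinate, is in
every convex set containing the chords. -/
theorem mem_of_between_chords {C : Set (Fin 2 → ℝ)} (hC : Convex ℝ C) (σ : ℝ)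
    {a b i k x : Fin 2 → ℝ} (hσ : σ ≠ 0) (ha : a ∈ C) (hb : b ∈ C) (hi : i ∈ C) (hk : k ∈ C)
    (hax : a 0 < x 0) (hxb : x 0 < b 0) (hix : i 0 < x 0) (hxk : x 0 < k 0)
    (hab : 0 ≤ σ * cross a x b) (hik : σ * cross i x k ≤ 0) : x ∈ C := by
  have hchord : ∀ a b : Fin 2 → ℝ, a ∈ C → b ∈ C → a 0 < x 0 → x 0 < b 0 →
      ![x 0, x 1 + cross a x b / (b 0 - a 0)] ∈ C := by
    intro a b ha hb hax hxb
    have hpos : 0 < b 0 - a 0 := by linarith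
    have h := hC ha hb (a := (b 0 - x 0) / (b 0 - a 0)) (b := (x 0 - a 0) / (b 0 - a 0))
      (div_nonneg (by linarith) hpos.le) (div_nonneg (by linarith) hpos.le)
      (by field_simp; ring)
    convert h using 1
    ext j
    fin_cases j <;> simp [cross] <;> field_simp <;> ring
  have h1 := hchord a b ha hb hax hxb
  have h2 := hchord i k hi hk hix hxk
  set r := cross a x b / (b 0 - a 0) with hr
  set q := cross i x k / (k 0 - i 0) with hq
  have hr' : 0 ≤ σ * r := by
    rw [hr, ← mul_div_assoc]
    exact div_nonneg hab (by linarith)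
  have hq' : σ * q ≤ 0 := by
    rw [hq, ← mul_div_assoc]
    exact div_nonpos_of_nonpos_of_nonneg hik (by linarith)
  by_cases hrq : σ * r - σ * q = 0
  · have hr0 : r = 0 := by
      have : σ * r = 0 := by linarith
      simpa [hσ] using this
    convert h1 using 1
    ext j
    fin_cases j <;> simp [hr0]
  · have hpos : 0 < σ * r - σ * q := lt_of_le_of_ne (by linarith) (Ne.symm hrq)
    have hne : r - q ≠ 0 := fun h => hrq (by rw [← mul_sub, h, mul_zero])
    have h := hC h1 h2 (a := -(σ * q) / (σ * r - σ * q)) (b := σ * r / (σ * r - σ * q))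
      (div_nonneg (by linarith) hpos.le) (div_nonneg hr' hpos.le) (by field_simp; ring)
    convert h using 1
    ext j
    fin_cases j <;> simp <;> field_simp <;> ring

/-- Enumerate a finite set in increasing order of an injective integer-valued function. -/
theorem exists_increasing_enumeration {ι : Type*} (s : Finset ι) (hs : s.Nonempty) (x : ι → ℤ)
    (hx : Function.Injective x) :
    ∃ p : ℕ → ι, (∀ i, i ≤ s.card - 1 → p i ∈ s) ∧
      ∀ i j, i < j → j ≤ s.card - 1 → x (p i) < x (p j) := by
  classical
  have hcard : (s.image x).card = s.card := Finset.card_image_of_injective s hx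
  have hpos := hs.card_pos
  let e := (s.image x).orderEmbOfFin hcard
  have he : ∀ i, ∃ u ∈ s, x u = e i := fun i =>
    Finset.mem_image.mp (Finset.orderEmbOfFin_mem _ hcard i)
  choose u hu hxu using he
  refine ⟨fun i => if h : i < s.card then u ⟨i, h⟩ else hs.choose, ?_, ?_⟩
  · intro i hi
    have h : i < s.card := by omega
    simp [h, hu]
  · intro i j hij hj
    have h : j < s.card := by omega
    have h' : i < s.card := by omega
    simp only [h, h', dif_pos, hxu]
    exact e.strictMono hij

/-- The area bound for lattice points in convex position with distinct first coordinates. -/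
theorem area_lower_bound_of_injective_fst (d : ℕ) (hd : 2 ≤ d) (v : Fin d → (Fin 2 → ℤ))
    (hx : Function.Injective fun i => v i 0)
    (hvert : ∀ i : Fin d, latticePoint (v i) ∉
      convexHull ℝ ((fun i' => latticePoint (v i')) '' {i' : Fin d | i' ≠ i})) :
    3 * ((d : ℝ) - 4) / 2 ≤
      volume.real (convexHull ℝ (Set.range fun i => latticePoint (v i))) := by
  classical
  have : Nontrivial (Fin d) := Fin.nontrivial_iff_two_le.mpr hd
  obtain ⟨a, ha⟩ := Finite.exists_min fun i => v i 0
  obtain ⟨b, hb⟩ := Finite.exists_max fun i => v i 0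
  have hlt : ∀ i, i ≠ a → v a 0 < v i 0 := fun i hi =>
    lt_of_le_of_ne (ha i) fun h => hi (hx h.symm)
  have hgt : ∀ i, i ≠ b → v i 0 < v b 0 := fun i hi =>
    lt_of_le_of_ne (hb i) fun h => hi (hx h)
  have hab : a ≠ b := by
    rintro rfl
    obtain ⟨i, hi⟩ := exists_ne a
    exact absurd (hlt i hi) (not_lt.mpr (hb i))
  have hbetween : ∀ (σ : ℤ) (i j k : Fin d), σ ≠ 0 → j ≠ a → j ≠ b → v i 0 < v j 0 →
      v j 0 < v k 0 → 0 ≤ σ * cross (v a) (v j) (v b) → 0 < σ * cross (v i) (v j) (v k) := by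
    intro σ i j k hσ hja hjb hij hjk h1
    by_contra! h2
    have hmem : ∀ l, l ≠ j → latticePoint (v l) ∈
        convexHull ℝ ((fun i' => latticePoint (v i')) '' {i' : Fin d | i' ≠ j}) :=
      fun l hl => subset_convexHull ℝ _ ⟨l, hl, rfl⟩
    refine hvert j (mem_of_between_chords (convex_convexHull ℝ _) (σ : ℝ)
      (by exact_mod_cast hσ) (hmem a hja.symm) (hmem b hjb.symm)
      (hmem i (by rintro rfl; exact lt_irrefl _ hij))
      (hmem k (by rintro rfl; exact lt_irrefl _ hjk))
      (Int.cast_lt.mpr (hlt j hja)) (Int.cast_lt.mpr (hgt j hjb))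
      (Int.cast_lt.mpr hij) (Int.cast_lt.mpr hjk) ?_ ?_)
    · rw [cross_latticePoint]
      exact_mod_cast h1
    · rw [cross_latticePoint]
      exact_mod_cast h2
  have hne : ∀ i, i ≠ a → i ≠ b → cross (v a) (v i) (v b) ≠ 0 := by
    intro i hia hib h
    have := hbetween 1 a i b one_ne_zero hia hib (hlt i hia) (hgt i hib) (by simp [h])
    simp [h] at this
  let S : ℤ → Finset (Fin d) := fun σ =>
    Finset.univ.filter fun i => 0 ≤ σ * cross (v a) (v i) (v b)
  have hcross_a : cross (v a) (v a) (v b) = 0 := by simp [cross]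
  have hcross_b : cross (v a) (v b) (v b) = 0 := by simp [cross, mul_comm]
  have haS : ∀ σ, a ∈ S σ := fun σ => by simp [S, hcross_a]
  have hcard : (S 1).card + (S (-1)).card = d + 2 := by
    have hunion : S 1 ∪ S (-1) = Finset.univ := by
      ext i
      simp only [S, Finset.mem_union, Finset.mem_filter, Finset.mem_univ, true_and, iff_true]
      omega
    have hinter : S 1 ∩ S (-1) = {a, b} := by
      ext i
      simp only [S, Finset.mem_inter, Finset.mem_filter, Finset.mem_univ, true_and,
        Finset.mem_insert, Finset.mem_singleton]
      constructor
      · rintro ⟨h1, h2⟩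
        by_contra! h
        exact hne i h.1 h.2 (by omega)
      · rintro (rfl | rfl)
        · simp [hcross_a]
        · simp [hcross_b]
    rw [← Finset.card_union_add_card_inter, hunion, hinter, Finset.card_pair hab]
    simp
  have hchain : ∀ σ : ℤ, |σ| = 1 → (3 * ((S σ).card : ℝ) - 9) / 2 ≤
      volume.real (convexHull ℝ ((fun i => latticePoint (v i)) '' (S σ : Set (Fin d)))) := by
    intro σ hσ
    obtain ⟨p, hpS, hpx⟩ := exists_increasing_enumeration (S σ) ⟨a, haS σ⟩ (fun i => v i 0) hx
    have hσ0 : σ ≠ 0 := by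
      rintro rfl
      simp at hσ
    have hvol := chain_area_le_volume σ hσ (fun i => v (p i)) ((S σ).card - 1) hpx (by
      intro i j k hij hjk hk
      have h1 := hpx i j hij (by omega)
      have h2 := hpx j k hjk hk
      have hj := hpS j (by omega)
      simp only [S, Finset.mem_filter, Finset.mem_univ, true_and] at hj
      refine hbetween σ (p i) (p j) (p k) hσ0 ?_ ?_ h1 h2 hj
      · intro h
        rw [h] at h1
        exact absurd h1 (not_lt.mpr (ha _))
      · intro h
        rw [h] at h2
        exact absurd h2 (not_lt.mpr (hb _)))
    have hsub : (fun i => latticePoint (v (p i))) '' Set.Iic ((S σ).card - 1) ⊆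
        (fun i => latticePoint (v i)) '' (S σ : Set (Fin d)) := by
      rintro _ ⟨i, hi, rfl⟩
      exact ⟨p i, hpS i hi, rfl⟩
    have hmono := measureReal_mono (μ := volume) (convexHull_mono (𝕜 := ℝ) hsub)
      (Set.Finite.isCompact_convexHull ℝ ((S σ).finite_toSet.image _)).measure_lt_top.ne
    have hpos : 1 ≤ (S σ).card := Finset.card_pos.mpr ⟨a, haS σ⟩
    generalize (S σ).card = n at *
    obtain ⟨m, rfl⟩ : ∃ m, n = m + 1 := ⟨n - 1, by omega⟩
    simp only [Nat.add_sub_cancel] at hvol hmono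
    have hquad : (0 : ℝ) ≤ ((m : ℝ) - 3) * (m - 4) := by
      have h : (0 : ℤ) ≤ ((m : ℤ) - 3) * (m - 4) := by
        rcases Nat.lt_or_ge m 4 with h | h
        · exact mul_nonneg_of_nonpos_of_nonpos (by omega) (by omega)
        · exact mul_nonneg (by omega) (by omega)
      exact_mod_cast h
    push_cast
    linarith
  let f := crossLinear (latticePoint (v a)) (latticePoint (v b))
  have hfc : ∀ i, f (latticePoint (v i)) - f (latticePoint (v a)) =
      ((-cross (v a) (v i) (v b) : ℤ) : ℝ) := by
    intro i
    rw [← cross_eq_crossLinear_sub, cross_latticePoint]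
    simp only [cross]
    push_cast
    ring
  have hf : f ≠ 0 := by
    intro h0
    have h := LinearMap.congr_fun h0 ![0, 1]
    simp only [f, crossLinear, latticePoint, LinearMap.sub_apply, LinearMap.smul_apply,
      LinearMap.proj_apply, smul_eq_mul, LinearMap.zero_apply, Matrix.cons_val_one,
      Matrix.cons_val_zero, mul_one, mul_zero, sub_zero] at h
    have h' : v b 0 - v a 0 = 0 := by exact_mod_cast h
    have := hlt b hab.symm
    omega
  have hsplit := volume_convexHull_add_le f hf (f (latticePoint (v a)))
    (s := (fun i => latticePoint (v i)) '' (S (-1) : Set (Fin d)))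
    (t := (fun i => latticePoint (v i)) '' (S 1 : Set (Fin d)))
    (Set.finite_range fun i => latticePoint (v i))
    (Set.image_subset_range _ _) (Set.image_subset_range _ _)
    (by
      rintro _ ⟨i, hi, rfl⟩
      simp only [S, Finset.coe_filter, Finset.mem_univ, true_and, Set.mem_ofPred_eq] at hi
      rw [← sub_nonneg]
      simp only
      rw [hfc, Int.cast_nonneg_iff]
      omega)
    (by
      rintro _ ⟨i, hi, rfl⟩
      simp only [S, Finset.coe_filter, Finset.mem_univ, true_and, Set.mem_ofPred_eq] at hi
      rw [← sub_nonpos]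
      simp only
      rw [hfc, Int.cast_nonpos]
      omega)
  have h1 := hchain 1 (by simp)
  have h2 := hchain (-1) (by simp)
  have hcard' : ((S 1).card : ℝ) + (S (-1)).card = d + 2 := by exact_mod_cast hcard
  linarith

/-- Finitely many distinct lattice points have distinct first coordinates after a shear. -/
theorem exists_shear_injective {d : ℕ} (v : Fin d → (Fin 2 → ℤ)) (hinj : Function.Injective v) :
    ∃ K : ℤ, Function.Injective fun i => v i 0 + K * v i 1 := by
  let B : ℤ := ∑ i, ∑ j, |v i 0 - v j 0|
  have hB : ∀ i j, |v i 0 - v j 0| ≤ B := fun i j =>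
    (Finset.single_le_sum (f := fun j => |v i 0 - v j 0|) (fun _ _ => abs_nonneg _)
      (Finset.mem_univ j)).trans
    (Finset.single_le_sum (f := fun i => ∑ j, |v i 0 - v j 0|)
      (fun _ _ => Finset.sum_nonneg fun _ _ => abs_nonneg _) (Finset.mem_univ i))
  refine ⟨B + 1, fun i j hij => hinj ?_⟩
  simp only at hij
  have hdvd : B + 1 ∣ v i 0 - v j 0 := ⟨v j 1 - v i 1, by linarith⟩
  have h0 : v i 0 - v j 0 = 0 :=
    Int.eq_zero_of_abs_lt_dvd hdvd (Int.lt_add_one_iff.mpr (hB i j))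
  have hB0 : 0 ≤ B := (abs_nonneg _).trans (hB i j)
  have h1 : v i 1 = v j 1 := mul_left_cancel₀ (by omega : B + 1 ≠ 0) (by linarith)
  ext l
  fin_cases l
  · exact sub_eq_zero.mp h0
  · exact h1

/-- A convex lattice polygon with `d` vertices whose only boundary lattice points
are its vertices has area at least `3(d-4)/2`. -/
theorem toric_diagram_area_lower_bound (d : ℕ) (hd : 3 ≤ d)
    (v : Fin d → (Fin 2 → ℤ)) (hinj : Function.Injective v)
    (D : Set (Fin 2 → ℝ))
    (hD : D = convexHull ℝ (Set.range (fun i => (fun j => (v i j : ℝ)))))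
    (hvert : ∀ i : Fin d,
      (fun j => (v i j : ℝ)) ∉
        convexHull ℝ ((fun i' => (fun j => (v i' j : ℝ))) '' {i' : Fin d | i' ≠ i}))
    (hint : (interior D).Nonempty)
    (hbdry : ∀ x : Fin 2 → ℤ, (fun j => (x j : ℝ)) ∈ frontier D → ∃ i, v i = x) :
    3 * ((d : ℝ) - 4) / 2 ≤ (volume D).toReal := by
  obtain ⟨K, hK⟩ := exists_shear_injective v hinj
  let M : Matrix (Fin 2) (Fin 2) ℝ := !![1, (K : ℝ); 0, 1]
  have hdet : M.det = 1 := by simp [M, Matrix.det_fin_two]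
  let w : Fin d → (Fin 2 → ℤ) := fun i => ![v i 0 + K * v i 1, v i 1]
  have hw : ∀ i, Matrix.toLin' M (fun j => (v i j : ℝ)) = latticePoint (w i) := by
    intro i
    ext j
    fin_cases j <;> simp [M, w, latticePoint, Matrix.mulVec, dotProduct, Fin.sum_univ_two]
  have hMinj : Function.Injective (Matrix.toLin' M) := by
    rw [Matrix.toLin'_apply', Matrix.coe_mulVecLin]
    exact Matrix.mulVec_injective_of_isUnit
      ((Matrix.isUnit_iff_isUnit_det M).mpr (by simp [hdet]))
  have hbound := area_lower_bound_of_injective_fst d (by omega) w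
    (by simpa [w] using hK) (by
      intro i hi
      refine hvert i ?_
      simp only [← hw] at hi
      rw [← Set.image_image (fun x => Matrix.toLin' M x), ← LinearMap.image_convexHull,
        hMinj.mem_set_image] at hi
      exact hi)
  simp only [← hw] at hbound
  rw [Set.range_comp' (Matrix.toLin' M), ← LinearMap.image_convexHull, ← hD, measureReal_def,
    Measure.addHaar_image_linearMap, LinearMap.det_toLin', hdet] at hbound
  simpa using hbound
end

section
/- Let n ≥ 1, let e₁, …, e_{2n} denote the standard basis of ℝ^{2n}, and consider the following 2n + 2 points of ℤ^{2n+1} = ℤ^{2n} × ℤ: the origin 0, the points (e_j, 0) for j = 1, …, 2n, and the point (e₁ + ⋯ + e_{2n}, 2). Let D ⊂ ℝ^{2n+1} be their convex hull. Then the topological interior of D contains no point of ℤ^{2n+1}. -/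
/-- The facet inequalities satisfied by the toric diagram of `ℝP^{4n+3}`. -/
lemma facet_inequalities_of_mem_convexHull {n : ℕ} {p : (Fin (2 * n) → ℝ) × ℝ}
    (hp : p ∈ convexHull ℝ
      ({(0, 0)} ∪
        Set.range (fun j : Fin (2 * n) => ((Pi.single j 1 : Fin (2 * n) → ℝ), (0 : ℝ))) ∪
        {((fun _ => 1 : Fin (2 * n) → ℝ), (2 : ℝ))})) :
    0 ≤ p.2 ∧ (∀ j, p.2 / 2 ≤ p.1 j) ∧ ∑ j, p.1 j ≤ 1 + (n - 1 / 2) * p.2 := by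
  let S : Set ((Fin (2 * n) → ℝ) × ℝ) :=
    {q | 0 ≤ q.2 ∧ (∀ j, q.2 / 2 ≤ q.1 j) ∧ ∑ j, q.1 j ≤ 1 + (n - 1 / 2) * q.2}
  have hS : Convex ℝ S := by
    rintro x ⟨hx₀, hx₁, hx₂⟩ y ⟨hy₀, hy₁, hy₂⟩ a b ha hb hab
    refine ⟨?_, fun j => ?_, ?_⟩
    · simp only [Prod.snd_add, Prod.smul_snd, smul_eq_mul]
      positivity
    · simp only [Prod.snd_add, Prod.smul_snd, Prod.fst_add, Prod.smul_fst, Pi.add_apply,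
        Pi.smul_apply, smul_eq_mul]
      linarith [mul_le_mul_of_nonneg_left (hx₁ j) ha, mul_le_mul_of_nonneg_left (hy₁ j) hb]
    · simp only [Prod.snd_add, Prod.smul_snd, Prod.fst_add, Prod.smul_fst, Pi.add_apply,
        Pi.smul_apply, smul_eq_mul, Finset.sum_add_distrib, ← Finset.mul_sum]
      linarith [mul_le_mul_of_nonneg_left hx₂ ha, mul_le_mul_of_nonneg_left hy₂ hb]
  refine convexHull_min (t := S) ?_ hS hp
  rintro q ((rfl | ⟨j, rfl⟩) | rfl)
  · simp [S]
  · refine ⟨le_rfl, fun i => ?_, by simp⟩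
    by_cases h : i = j <;> simp [h]
  · refine ⟨zero_le_two, fun i => by simp, ?_⟩
    simp only [Finset.sum_const, Finset.card_univ, Fintype.card_fin, nsmul_eq_mul]
    push_cast
    linarith

/-- From an interior point one can move a positive distance in any direction inside the set. -/
lemma exists_pos_add_smul_mem_of_mem_interior {E : Type*} [AddCommGroup E] [Module ℝ E]
    [TopologicalSpace E] [ContinuousAdd E] [ContinuousSMul ℝ E] {s : Set E} {p : E}
    (hp : p ∈ interior s) (v : E) : ∃ ε : ℝ, 0 < ε ∧ p + ε • v ∈ s := by
  have hc : Filter.Tendsto (fun ε : ℝ => p + ε • v) (nhds 0) (nhds p) := by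
    have h : Continuous fun ε : ℝ => p + ε • v := by fun_prop
    simpa using h.tendsto 0
  obtain ⟨ε, hmem, hε⟩ := (((hc.eventually (mem_interior_iff_mem_nhds.mp hp)).filter_mono
    nhdsWithin_le_nhds).and (self_mem_nhdsWithin (s := Set.Ioi (0 : ℝ)))).exists
  exact ⟨ε, hε, hmem⟩


/-- The toric diagram of `ℝP^{4n+3}`: the convex hull of `0`, `(eⱼ, 0)` for
`j = 1, …, 2n`, and `(e₁ + ⋯ + e_{2n}, 2)` in `ℝ^{2n} × ℝ` contains no lattice point
of `ℤ^{2n} × ℤ` in its interior. -/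
theorem no_interior_lattice_points (n : ℕ) (hn : 1 ≤ n)
    (D : Set ((Fin (2 * n) → ℝ) × ℝ))
    (hD : D = convexHull ℝ
      ({(0, 0)} ∪
        Set.range (fun j : Fin (2 * n) => ((Pi.single j 1 : Fin (2 * n) → ℝ), (0 : ℝ))) ∪
        {((fun _ => 1 : Fin (2 * n) → ℝ), (2 : ℝ))})) :
    ∀ x : (Fin (2 * n) → ℤ) × ℤ,
      ((fun i => (x.1 i : ℝ)), (x.2 : ℝ)) ∉ interior D := by
  intro x hx
  subst hD
  obtain ⟨-, hhalf, -⟩ := facet_inequalities_of_mem_convexHull (interior_subset hx)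
  obtain ⟨ε, hε, hmem⟩ := exists_pos_add_smul_mem_of_mem_interior hx (0, -1)
  obtain ⟨hnonneg, -, hsum⟩ := facet_inequalities_of_mem_convexHull hmem
  simp only [Prod.mk_add_mk, Prod.smul_mk, smul_zero, smul_eq_mul, add_zero] at hhalf hnonneg hsum
  have hn' : (1 : ℝ) ≤ n := by exact_mod_cast hn
  have hsum_lt : ∑ j, (x.1 j : ℝ) < 1 + (n - 1 / 2) * (x.2 : ℝ) := by nlinarith
  have hpos : 0 < x.2 := by
    have h : (0 : ℝ) < x.2 := by linarith
    exact_mod_cast h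
  have hlt : x.2 < 2 := by
    have h := Finset.card_nsmul_le_sum Finset.univ (fun j => (x.1 j : ℝ)) _ fun j _ => hhalf j
    simp only [Finset.card_univ, Fintype.card_fin, nsmul_eq_mul] at h
    push_cast at h
    have h' : (x.2 : ℝ) < 2 := by linarith
    exact_mod_cast h'
  have hone : x.2 = 1 := by omega
  rw [hone] at hhalf hsum_lt
  have hge : ∀ j, (1 : ℝ) ≤ x.1 j := fun j => by
    have h : (0 : ℝ) < x.1 j := lt_of_lt_of_le (by norm_num) (hhalf j)
    exact_mod_cast h
  have h := Finset.card_nsmul_le_sum Finset.univ (fun j => (x.1 j : ℝ)) _ fun j _ => hge j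
  simp only [Finset.card_univ, Fintype.card_fin, nsmul_eq_mul] at h
  push_cast at h hsum_lt
  linarith
end

section
/- Let k and p be positive integers and consider the following 4k + 4 points of ℤ²: (0,0), (1,0), (0, 2k+1), (1, 2k+1), and, for each j = 0, 1, …, k−1, the four points (−(k−j)(k+j+1)/2, k−j), (−(k−j)(k+j+1)/2, k+j+1), ((k−j)(k+j+1)/2 + p, k−j), ((k−j)(k+j+1)/2 + p, k+j+1). Then the convex hull of these points in ℝ² has Lebesgue measure (area) equal to 2k + 1 + 2k(k+1)(2k+1)/3 + 2k(p − 1). -/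
open MeasureTheory

/-- The value at `y` of the affine function through `(i, a i)` and `(i + 1, a (i + 1))`. -/
def chord (a : ℕ → ℝ) (i : ℕ) (y : ℝ) : ℝ := a i + (y - i) * (a (i + 1) - a i)

theorem chord_self (a : ℕ → ℝ) (i : ℕ) : chord a i i = a i := by simp [chord]

theorem chord_succ (a : ℕ → ℝ) (i : ℕ) : chord a i ((i : ℝ) + 1) = a (i + 1) := by simp [chord]

theorem continuous_chord (a : ℕ → ℝ) (i : ℕ) : Continuous (chord a i) := by
  unfold chord; fun_prop

theorem chord_eq_interpolation (a : ℕ → ℝ) (i m : ℕ) (y : ℝ) :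
    chord a i y = (m + 1 - y) * chord a i m + (y - m) * chord a i ((m : ℝ) + 1) := by
  unfold chord; ring

/-- The region `0 ≤ y ≤ N` lying to the right of all chords of `a` and to the left of all chords
of `b`, in coordinates `![x, y]`. -/
def chordRegion (N : ℕ) (a b : ℕ → ℝ) : Set (Fin 2 → ℝ) :=
  {v | (0 ≤ v 1 ∧ v 1 ≤ N) ∧ ∀ i < N, chord a i (v 1) ≤ v 0 ∧ v 0 ≤ chord b i (v 1)}

/-- The points `![a m, m]` and `![b m, m]` for `m ≤ N`. -/
def rowPoints (N : ℕ) (a b : ℕ → ℝ) : Set (Fin 2 → ℝ) :=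
  {v | ∃ m ≤ N, v = ![a m, m] ∨ v = ![b m, m]}

theorem convex_chordRegion (N : ℕ) (a b : ℕ → ℝ) : Convex ℝ (chordRegion N a b) := by
  rintro v ⟨⟨hv0, hvN⟩, hv⟩ w ⟨⟨hw0, hwN⟩, hw⟩ s t hs ht hst
  have hchord (c : ℕ → ℝ) (i : ℕ) :
      chord c i (s * v 1 + t * w 1) = s * chord c i (v 1) + t * chord c i (w 1) := by
    obtain rfl : t = 1 - s := by linarith
    unfold chord; ring
  simp only [chordRegion, Set.mem_ofPred_eq, Pi.add_apply, Pi.smul_apply, smul_eq_mul, hchord]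
  refine ⟨⟨by positivity, ?_⟩, fun i hi => ⟨?_, ?_⟩⟩
  · calc s * v 1 + t * w 1 ≤ s * N + t * N := by gcongr
      _ = N := by rw [← add_mul, hst, one_mul]
  · have := (hv i hi).1
    have := (hw i hi).1
    gcongr
  · have := (hv i hi).2
    have := (hw i hi).2
    gcongr

theorem isClosed_chordRegion (N : ℕ) (a b : ℕ → ℝ) : IsClosed (chordRegion N a b) := by
  have hc (c : ℕ → ℝ) (i : ℕ) : Continuous fun v : Fin 2 → ℝ => chord c i (v 1) :=
    (continuous_chord c i).comp (continuous_apply 1)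
  simp only [chordRegion, Set.ofPred_and, Set.ofPred_forall]
  refine ((isClosed_le (by fun_prop) (by fun_prop)).inter
    (isClosed_le (by fun_prop) (by fun_prop))).inter ?_
  exact isClosed_iInter fun i => isClosed_iInter fun _ =>
    (isClosed_le (hc a i) (by fun_prop)).inter (isClosed_le (by fun_prop) (hc b i))

theorem exists_nat_mem_unit_interval {N : ℕ} (hN : 0 < N) {y : ℝ} (h0 : 0 ≤ y) (hy : y ≤ N) :
    ∃ m < N, (m : ℝ) ≤ y ∧ y ≤ m + 1 := by
  rcases hy.lt_or_eq with h | rfl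
  · exact ⟨⌊y⌋₊, (Nat.floor_lt h0).2 h, Nat.floor_le h0, (Nat.lt_floor_add_one y).le⟩
  · have hcast : ((N - 1 : ℕ) : ℝ) = N - 1 := Nat.cast_pred hN
    exact ⟨N - 1, by omega, by linarith, by linarith⟩

theorem chordRegion_subset_convexHull {N : ℕ} (hN : 0 < N) (a b : ℕ → ℝ) :
    chordRegion N a b ⊆ convexHull ℝ (rowPoints N a b) := by
  rintro v ⟨⟨hv0, hvN⟩, hv⟩
  obtain ⟨m, hm, hmy, hym⟩ := exists_nat_mem_unit_interval hN hv0 hvN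
  have hconv := convex_convexHull ℝ (rowPoints N a b)
  have hedge (c : ℕ → ℝ) (hc : ∀ n ≤ N, ![c n, (n : ℝ)] ∈ rowPoints N a b) :
      ![chord c m (v 1), v 1] ∈ convexHull ℝ (rowPoints N a b) := by
    have h := hconv (subset_convexHull ℝ _ (hc m hm.le)) (subset_convexHull ℝ _ (hc (m + 1) hm))
      (sub_nonneg.2 hym) (sub_nonneg.2 hmy) (by ring)
    convert h using 1
    ext i
    fin_cases i <;> simp [chord] <;> ring
  have ha := hedge a fun n hn => ⟨n, hn, Or.inl rfl⟩
  have hb := hedge b fun n hn => ⟨n, hn, Or.inr rfl⟩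
  have hx : v 0 ∈ segment ℝ (chord a m (v 1)) (chord b m (v 1)) := by
    rw [segment_eq_Icc ((hv m hm).1.trans (hv m hm).2)]
    exact hv m hm
  obtain ⟨s, t, hs, ht, hst, hx⟩ := hx
  convert hconv ha hb hs ht hst using 1
  ext i
  fin_cases i
  · simpa using hx.symm
  · simp [← add_mul, hst]

section Area

variable {N : ℕ} {a b : ℕ → ℝ}

theorem rowPoints_subset_chordRegion (ha : ∀ i < N, ∀ n ≤ N, chord a i n ≤ a n)
    (hb : ∀ i < N, ∀ n ≤ N, b n ≤ chord b i n) (hab : ∀ n ≤ N, a n ≤ b n) :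
    rowPoints N a b ⊆ chordRegion N a b := by
  rintro v ⟨n, hn, rfl | rfl⟩
  · exact ⟨⟨by simp, by simpa using hn⟩, fun i hi =>
      ⟨ha i hi n hn, (hab n hn).trans (hb i hi n hn)⟩⟩
  · exact ⟨⟨by simp, by simpa using hn⟩, fun i hi =>
      ⟨(ha i hi n hn).trans (hab n hn), hb i hi n hn⟩⟩

theorem convexHull_rowPoints (hN : 0 < N) (ha : ∀ i < N, ∀ n ≤ N, chord a i n ≤ a n)
    (hb : ∀ i < N, ∀ n ≤ N, b n ≤ chord b i n) (hab : ∀ n ≤ N, a n ≤ b n) :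
    convexHull ℝ (rowPoints N a b) = chordRegion N a b :=
  (convexHull_min (rowPoints_subset_chordRegion ha hb hab) (convex_chordRegion N a b)).antisymm
    (chordRegion_subset_convexHull hN a b)

/-- Above `[m, m + 1]`, the chord of a convex sequence with index `m` dominates all others. -/
theorem chord_le_chord (ha : ∀ i < N, ∀ n ≤ N, chord a i n ≤ a n) {i m : ℕ} (hi : i < N)
    (hm : m < N) {y : ℝ} (hmy : m ≤ y) (hym : y ≤ m + 1) : chord a i y ≤ chord a m y := by
  rw [chord_eq_interpolation a i m, chord_eq_interpolation a m m, chord_self, chord_succ]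
  have h₁ := ha i hi m hm.le
  have h₂ := ha i hi (m + 1) hm
  push_cast at h₂
  have := sub_nonneg.2 hmy
  have := sub_nonneg.2 hym
  gcongr

theorem chord_neg (a : ℕ → ℝ) (i : ℕ) (y : ℝ) : chord (-a) i y = -chord a i y := by
  simp only [chord, Pi.neg_apply]; ring

theorem slice_chordRegion (ha : ∀ i < N, ∀ n ≤ N, chord a i n ≤ a n)
    (hb : ∀ i < N, ∀ n ≤ N, b n ≤ chord b i n) {m : ℕ} (hm : m < N) {y : ℝ}
    (hmy : m ≤ y) (hym : y ≤ m + 1) :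
    {x | ![x, y] ∈ chordRegion N a b} = Set.Icc (chord a m y) (chord b m y) := by
  ext x
  refine ⟨fun h => h.2 m hm, fun h => ⟨⟨m.cast_nonneg.trans hmy, hym.trans ?_⟩, fun i hi =>
    ⟨(chord_le_chord ha hi hm hmy hym).trans h.1, h.2.trans ?_⟩⟩⟩
  · exact_mod_cast hm
  · have := chord_le_chord (a := -b) (fun i hi n hn => by
      simpa [chord_neg] using hb i hi n hn) hi hm hmy hym
    simpa [chord_neg] using this

theorem setLIntegral_Ico_natCast (F : ℝ → ENNReal) (n : ℕ) :
    ∫⁻ y in Set.Ico (0 : ℝ) n, F y =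
      ∑ m ∈ Finset.range n, ∫⁻ y in Set.Ico (m : ℝ) (m + 1), F y := by
  induction n with
  | zero => simp
  | succ n ih =>
    rw [Finset.sum_range_succ, ← ih, ← lintegral_union measurableSet_Ico, Nat.cast_succ,
      Set.Ico_union_Ico_eq_Ico n.cast_nonneg (by linarith)]
    exact Set.disjoint_left.2 fun y h₁ h₂ => h₁.2.not_ge h₂.1

theorem integral_chord (a : ℕ → ℝ) (m : ℕ) :
    ∫ y in (m : ℝ)..(m + 1), chord a m y = (a m + a (m + 1)) / 2 := by
  have h (y : ℝ) : chord a m y = (a m - m * (a (m + 1) - a m)) + (a (m + 1) - a m) * y := by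
    unfold chord; ring
  simp only [h]
  rw [intervalIntegral.integral_add (by simp)
    ((continuous_const_mul (a (m + 1) - a m)).intervalIntegrable _ _),
    intervalIntegral.integral_const_mul, integral_id, intervalIntegral.integral_const]
  simp only [smul_eq_mul]
  ring

theorem setLIntegral_chord_sub {m : ℕ} (h₀ : a m ≤ b m) (h₁ : a (m + 1) ≤ b (m + 1)) :
    ∫⁻ y in Set.Ico (m : ℝ) (m + 1), ENNReal.ofReal (chord b m y - chord a m y) =
      ENNReal.ofReal ((b m + b (m + 1)) / 2 - (a m + a (m + 1)) / 2) := by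
  have hcont : Continuous fun y => chord b m y - chord a m y :=
    (continuous_chord b m).sub (continuous_chord a m)
  rw [← ofReal_integral_eq_lintegral_ofReal, integral_Ico_eq_integral_Ioc,
    ← intervalIntegral.integral_of_le (by linarith), intervalIntegral.integral_sub
      ((continuous_chord b m).intervalIntegrable _ _)
      ((continuous_chord a m).intervalIntegrable _ _), integral_chord, integral_chord]
  · exact (hcont.integrableOn_Icc).mono_set Set.Ico_subset_Icc_self
  · filter_upwards [ae_restrict_mem measurableSet_Ico] with y hy
    simp only [Pi.zero_apply, sub_nonneg]
    rw [chord_eq_interpolation a m m, chord_eq_interpolation b m m]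
    simp only [chord_self, chord_succ]
    have := sub_nonneg.2 hy.1
    have := sub_nonneg.2 hy.2.le
    gcongr

theorem volume_eq_lintegral_slices {S : Set (Fin 2 → ℝ)} (hS : MeasurableSet S) :
    volume S = ∫⁻ y : ℝ, volume {x : ℝ | ![x, y] ∈ S} := by
  have e := (volume_preserving_finTwoArrow ℝ).symm
  rw [← e.measure_preimage hS.nullMeasurableSet, Measure.volume_eq_prod,
    Measure.prod_apply_symm (e.measurable hS)]
  rfl

/-- Trapezoidal formula for the area of the polygon spanned by a convex and a concave sequence. -/
theorem volume_convexHull_rowPoints (hN : 0 < N) (ha : ∀ i < N, ∀ n ≤ N, chord a i n ≤ a n)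
    (hb : ∀ i < N, ∀ n ≤ N, b n ≤ chord b i n) (hab : ∀ n ≤ N, a n ≤ b n) :
    (volume (convexHull ℝ (rowPoints N a b))).toReal =
      ∑ m ∈ Finset.range N, ((b m + b (m + 1)) / 2 - (a m + a (m + 1)) / 2) := by
  have hsupp : ∀ y ∉ Set.Icc (0 : ℝ) N, volume {x : ℝ | ![x, y] ∈ chordRegion N a b} = 0 := by
    intro y hy
    have hempty : {x : ℝ | ![x, y] ∈ chordRegion N a b} = ∅ :=
      Set.eq_empty_of_forall_notMem fun x hx => hy hx.1
    rw [hempty, measure_empty]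
  rw [convexHull_rowPoints hN ha hb hab,
    volume_eq_lintegral_slices (isClosed_chordRegion N a b).measurableSet,
    ← setLIntegral_eq_of_support_subset (s := Set.Icc (0 : ℝ) N),
    setLIntegral_congr Ico_ae_eq_Icc.symm, setLIntegral_Ico_natCast]
  · have hterm : ∀ m ∈ Finset.range N,
        ∫⁻ y in Set.Ico (m : ℝ) (m + 1), volume {x : ℝ | ![x, y] ∈ chordRegion N a b} =
          ENNReal.ofReal ((b m + b (m + 1)) / 2 - (a m + a (m + 1)) / 2) := by
      intro m hm
      rw [Finset.mem_range] at hm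
      rw [← setLIntegral_chord_sub (hab m hm.le) (hab (m + 1) hm)]
      refine setLIntegral_congr_fun measurableSet_Ico fun y hy => ?_
      simp only [slice_chordRegion ha hb hm hy.1 hy.2.le, Real.volume_Icc]
    rw [Finset.sum_congr rfl hterm, ← ENNReal.ofReal_sum_of_nonneg, ENNReal.toReal_ofReal]
    all_goals
      have hnonneg : ∀ m ∈ Finset.range N,
          0 ≤ (b m + b (m + 1)) / 2 - (a m + a (m + 1)) / 2 := by
        intro m hm
        rw [Finset.mem_range] at hm
        linarith [hab m hm.le, hab (m + 1) hm]
    · exact Finset.sum_nonneg hnonneg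
    · exact hnonneg
  · exact Function.support_subset_iff'.2 hsupp

end Area

/-- Abscissa of the left vertex of the diagram at height `m`. -/
noncomputable def leftVertex (k m : ℕ) : ℝ := -((m : ℝ) * (2 * k + 1 - m) / 2)

/-- Abscissa of the right vertex of the diagram at height `m`. -/
noncomputable def rightVertex (k p m : ℕ) : ℝ :=
  if m = 0 ∨ m = 2 * k + 1 then 1 else (m : ℝ) * (2 * k + 1 - m) / 2 + p

theorem consecutive_product_nonneg (i n : ℕ) : 0 ≤ ((n : ℝ) - i) * ((n : ℝ) - i - 1) := by
  rcases le_or_gt n i with h | h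
  · have : (n : ℝ) ≤ i := by exact_mod_cast h
    nlinarith
  · have : (i : ℝ) + 1 ≤ n := by exact_mod_cast h
    nlinarith

theorem chord_leftVertex_le (k i n : ℕ) : chord (leftVertex k) i n ≤ leftVertex k n := by
  have := consecutive_product_nonneg i n
  simp only [chord, leftVertex]
  push_cast
  linarith

theorem rightVertex_le_chord {k p : ℕ} (hk : 1 ≤ k) (hp : 1 ≤ p) {i n : ℕ} (hi : i < 2 * k + 1)
    (hn : n ≤ 2 * k + 1) : rightVertex k p n ≤ chord (rightVertex k p) i n := by
  have hprod := consecutive_product_nonneg i n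
  have hp' : (1 : ℝ) ≤ p := by exact_mod_cast hp
  have hn' : (n : ℝ) ≤ 2 * k + 1 := by exact_mod_cast hn
  rcases eq_or_ne n i with rfl | hni
  · rw [chord_self]
  rcases eq_or_ne n (i + 1) with rfl | hni'
  · rw [Nat.cast_succ, chord_succ]
  have hle : rightVertex k p n ≤ (n : ℝ) * (2 * k + 1 - n) / 2 + p := by
    have := mul_nonneg n.cast_nonneg (sub_nonneg.2 hn')
    unfold rightVertex
    split_ifs <;> linarith
  refine hle.trans ?_
  rcases Nat.eq_zero_or_pos i with rfl | hi0
  · have hn2 : (1 : ℝ) ≤ n := by exact_mod_cast Nat.one_le_iff_ne_zero.2 hni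
    simp only [chord, rightVertex]
    rw [if_pos (by simp), if_neg (by omega)]
    push_cast at hprod ⊢
    nlinarith [mul_nonneg (sub_nonneg.2 hp') (sub_nonneg.2 hn2)]
  rcases eq_or_ne i (2 * k) with rfl | hi2
  · have hn2 : (n : ℝ) ≤ 2 * k := by exact_mod_cast (show n ≤ 2 * k by omega)
    simp only [chord, rightVertex]
    rw [if_neg (by omega), if_pos (by simp)]
    push_cast at hprod ⊢
    nlinarith [mul_nonneg (sub_nonneg.2 hp') (sub_nonneg.2 hn2)]
  · simp only [chord, rightVertex]
    rw [if_neg (by omega), if_neg (by omega)]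
    push_cast
    linarith

theorem leftVertex_le_rightVertex {k p m : ℕ} (hm : m ≤ 2 * k + 1) :
    leftVertex k m ≤ rightVertex k p m := by
  have hm' : (m : ℝ) ≤ 2 * k + 1 := by exact_mod_cast hm
  have : 0 ≤ (m : ℝ) * (2 * k + 1 - m) / 2 :=
    div_nonneg (mul_nonneg m.cast_nonneg (by linarith)) (by norm_num)
  have hp : (0 : ℝ) ≤ p := p.cast_nonneg
  unfold leftVertex rightVertex
  split_ifs <;> linarith

theorem sum_range_mul_sub (k n : ℕ) :
    ∑ m ∈ Finset.range n, ((m : ℝ) + 1) * (2 * k + 1 - (m + 1)) =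
      n * (n + 1) * (6 * k + 2 - 2 * n) / 6 := by
  induction n with
  | zero => simp
  | succ n ih => rw [Finset.sum_range_succ, ih]; push_cast; ring

theorem sum_trapezoids (k p : ℕ) :
    ∑ m ∈ Finset.range (2 * k + 1), ((rightVertex k p m + rightVertex k p (m + 1)) / 2 -
      (leftVertex k m + leftVertex k (m + 1)) / 2) =
    2 * (k : ℝ) + 1 + 2 * k * (k + 1) * (2 * k + 1) / 3 + 2 * k * ((p : ℝ) - 1) := by
  have hwidth : ∀ m ∈ Finset.range (2 * k),
      rightVertex k p (m + 1) - leftVertex k (m + 1) =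
        ((m : ℝ) + 1) * (2 * k + 1 - (m + 1)) + p := by
    intro m hm
    rw [Finset.mem_range] at hm
    rw [rightVertex, if_neg (by omega), leftVertex]
    push_cast
    ring
  have hsplit (m : ℕ) : (rightVertex k p m + rightVertex k p (m + 1)) / 2 -
      (leftVertex k m + leftVertex k (m + 1)) / 2 =
      (rightVertex k p m - leftVertex k m) / 2 +
        (rightVertex k p (m + 1) - leftVertex k (m + 1)) / 2 := by ring
  have hinner := Finset.sum_congr rfl hwidth
  rw [Finset.sum_add_distrib, sum_range_mul_sub, Finset.sum_const, Finset.card_range,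
    nsmul_eq_mul] at hinner
  have hfirst : rightVertex k p 0 - leftVertex k 0 = 1 := by simp [rightVertex, leftVertex]
  have hlast : rightVertex k p (2 * k + 1) - leftVertex k (2 * k + 1) = 1 := by
    simp [rightVertex, leftVertex]
  simp only [hsplit]
  rw [Finset.sum_add_distrib, Finset.sum_range_succ', Finset.sum_range_succ _ (2 * k),
    ← Finset.sum_div, hinner, hfirst, hlast]
  push_cast
  ring

theorem diagram_eq_rowPoints (k p : ℕ) :
    (({![0, 0], ![1, 0], ![0, 2 * (k : ℝ) + 1], ![1, 2 * (k : ℝ) + 1]} :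
          Set (Fin 2 → ℝ)) ∪
        ⋃ j ∈ Finset.range k,
          ({![-(((k : ℝ) - (j : ℝ)) * ((k : ℝ) + (j : ℝ) + 1) / 2), (k : ℝ) - (j : ℝ)],
            ![-(((k : ℝ) - (j : ℝ)) * ((k : ℝ) + (j : ℝ) + 1) / 2),
              (k : ℝ) + (j : ℝ) + 1],
            ![((k : ℝ) - (j : ℝ)) * ((k : ℝ) + (j : ℝ) + 1) / 2 + (p : ℝ),
              (k : ℝ) - (j : ℝ)],
            ![((k : ℝ) - (j : ℝ)) * ((k : ℝ) + (j : ℝ) + 1) / 2 + (p : ℝ),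
              (k : ℝ) + (j : ℝ) + 1]} : Set (Fin 2 → ℝ))) =
      rowPoints (2 * k + 1) (leftVertex k) (rightVertex k p) := by
  have hlow {j : ℕ} (hj : j < k) : ((k - j : ℕ) : ℝ) = k - j := Nat.cast_sub hj.le
  have hleft_low {j : ℕ} (hj : j < k) :
      leftVertex k (k - j) = -(((k : ℝ) - j) * ((k : ℝ) + j + 1) / 2) := by
    rw [leftVertex, hlow hj]; ring
  have hleft_high (j : ℕ) :
      leftVertex k (k + j + 1) = -(((k : ℝ) - j) * ((k : ℝ) + j + 1) / 2) := by
    rw [leftVertex]; push_cast; ring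
  have hright_low {j : ℕ} (hj : j < k) :
      rightVertex k p (k - j) = ((k : ℝ) - j) * ((k : ℝ) + j + 1) / 2 + p := by
    rw [rightVertex, if_neg (by omega), hlow hj]; ring
  have hright_high {j : ℕ} (hj : j < k) :
      rightVertex k p (k + j + 1) = ((k : ℝ) - j) * ((k : ℝ) + j + 1) / 2 + p := by
    rw [rightVertex, if_neg (by omega)]; push_cast; ring
  ext v
  simp only [rowPoints, Set.mem_union, Set.mem_insert_iff, Set.mem_singleton_iff, Set.mem_iUnion,
    Finset.mem_range, Set.mem_ofPred_eq, exists_prop]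
  constructor
  · rintro ((rfl | rfl | rfl | rfl) | ⟨j, hj, (rfl | rfl | rfl | rfl)⟩)
    · exact ⟨0, by omega, Or.inl (by simp [leftVertex])⟩
    · exact ⟨0, by omega, Or.inr (by simp [rightVertex])⟩
    · exact ⟨2 * k + 1, le_rfl, Or.inl (by simp [leftVertex])⟩
    · exact ⟨2 * k + 1, le_rfl, Or.inr (by simp [rightVertex])⟩
    · exact ⟨k - j, by omega, Or.inl (by rw [hleft_low hj, hlow hj])⟩
    · exact ⟨k + j + 1, by omega, Or.inl (by rw [hleft_high j]; push_cast; rfl)⟩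
    · exact ⟨k - j, by omega, Or.inr (by rw [hright_low hj, hlow hj])⟩
    · exact ⟨k + j + 1, by omega, Or.inr (by rw [hright_high hj]; push_cast; rfl)⟩
  · rintro ⟨m, hm, hv⟩
    rcases Nat.eq_zero_or_pos m with rfl | hm0
    · left
      rcases hv with rfl | rfl <;> simp [leftVertex, rightVertex]
    rcases hm.eq_or_lt with rfl | hmN
    · left
      rcases hv with rfl | rfl <;> simp [leftVertex, rightVertex]
    right
    rcases le_or_gt m k with hmk | hmk
    · obtain ⟨j, hj, rfl⟩ : ∃ j < k, m = k - j := ⟨k - m, by omega, by omega⟩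
      rw [hleft_low hj, hright_low hj, hlow hj] at hv
      exact ⟨j, hj, by tauto⟩
    · obtain ⟨j, hj, rfl⟩ : ∃ j < k, m = k + j + 1 := ⟨m - k - 1, by omega, by omega⟩
      rw [hleft_high j, hright_high hj] at hv
      push_cast at hv
      exact ⟨j, hj, by tauto⟩

/-- The `(4k+4)`-gon toric diagram of `(#_{4k+1} S² × S³, ξ_p)` has area
`2k + 1 + 2k(k+1)(2k+1)/3 + 2k(p-1)`. -/
theorem area_diagram_4k4gon (k p : ℕ) (hk : 1 ≤ k) (hp : 1 ≤ p) :
    (volume (convexHull ℝ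
      (({![0, 0], ![1, 0], ![0, 2 * (k : ℝ) + 1], ![1, 2 * (k : ℝ) + 1]} :
          Set (Fin 2 → ℝ)) ∪
        ⋃ j ∈ Finset.range k,
          ({![-(((k : ℝ) - (j : ℝ)) * ((k : ℝ) + (j : ℝ) + 1) / 2), (k : ℝ) - (j : ℝ)],
            ![-(((k : ℝ) - (j : ℝ)) * ((k : ℝ) + (j : ℝ) + 1) / 2),
              (k : ℝ) + (j : ℝ) + 1],
            ![((k : ℝ) - (j : ℝ)) * ((k : ℝ) + (j : ℝ) + 1) / 2 + (p : ℝ),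
              (k : ℝ) - (j : ℝ)],
            ![((k : ℝ) - (j : ℝ)) * ((k : ℝ) + (j : ℝ) + 1) / 2 + (p : ℝ),
              (k : ℝ) + (j : ℝ) + 1]} : Set (Fin 2 → ℝ))))).toReal =
    2 * (k : ℝ) + 1 + 2 * k * (k + 1) * (2 * k + 1) / 3 + 2 * k * ((p : ℝ) - 1) := by
  rw [diagram_eq_rowPoints, volume_convexHull_rowPoints (Nat.succ_pos (2 * k))
    (fun i _ n _ => chord_leftVertex_le k i n)
    (fun i hi n hn => rightVertex_le_chord hk hp hi hn)
    (fun n hn => leftVertex_le_rightVertex hn), sum_trapezoids]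
end
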